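/- arXiv:1512.08640 — 9 statements merged into one kernel-verified Lean document; each statement's English description precedes it below -/
import Mathlib

section
/- Fix real parameters ν>0, v, B, H with H ≠ 0 and |B| = |v| + 1/ν. If v ≠ 0, then λ = −sgn(v)/ν is the unique real number with ν|λ| ≤ 1 satisfying (λ−v)² − B² = H²·√(1−ν²λ²). If v = 0, then the set of real numbers λ with ν|λ| ≤ 1 satisfying this relation is exactly {1/ν, −1/ν}. In all cases every such root satisfies |λ| = 1/ν. -/
/-!
A root satisfies `|l| ≤ 1 / ν`, and since the square root is nonnegative it also satisfies
`|B| ≤ |l - v|`. At the threshold `|v| + 1 / ν = |B| ≤ |l - v| ≤ |l| + |v| ≤ 1 / ν + |v|`, so all of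
these are equalities: `|l| = 1 / ν`, and `l` and `v` have opposite signs (or `v = 0`).
-/

section TriangleInequality

theorem norm_eq_and_norm_sub_eq_of_add_le {E : Type*} [SeminormedAddGroup E] {x y : E} {r : ℝ}
    (hx : ‖x‖ ≤ r) (hxy : ‖y‖ + r ≤ ‖x - y‖) : ‖x‖ = r ∧ ‖x - y‖ = ‖x‖ + ‖y‖ := by
  have htriangle : ‖x - y‖ ≤ ‖x‖ + ‖y‖ := norm_sub_le x y
  constructor <;> linarith

theorem abs_sub_eq_abs_add_abs_iff_mul_nonpos {R : Type*} [Ring R] [LinearOrder R]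
    [IsStrictOrderedRing R] {a b : R} : |a - b| = |a| + |b| ↔ a * b ≤ 0 := by
  rw [sub_eq_add_neg, ← abs_neg b, abs_add_eq_add_abs_iff, mul_nonpos_iff]
  simp only [neg_nonneg, neg_nonpos]

theorem abs_eq_and_mul_nonpos_iff_eq_neg_sign_mul {x y r : ℝ} (hy : y ≠ 0) (hr : 0 ≤ r) :
    |x| = r ∧ x * y ≤ 0 ↔ x = -Real.sign y * r := by
  rcases hy.lt_or_gt with hneg | hpos
  · have hsign : x * y ≤ 0 ↔ 0 ≤ x := by
      simp only [mul_nonpos_iff, hneg.le, hneg.not_ge, and_true, and_false, or_false]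
    rw [Real.sign_of_neg hneg, neg_neg, one_mul, hsign]
    grind
  · have hsign : x * y ≤ 0 ↔ x ≤ 0 := by
      simp only [mul_nonpos_iff, hpos.le, hpos.not_ge, and_true, and_false, false_or]
    rw [Real.sign_of_pos hpos, neg_one_mul, hsign]
    grind

end TriangleInequality

section DispersionRoot

/-- `l` is a (real) root of the surface-wave dispersion relation on the plasma–vacuum interface,
where `σ(l) = √(1 - ν² l²)`. The bound `ν * |l| ≤ 1` is part of the definition because
`Real.sqrt` is `0` at negative arguments. -/
def IsDispersionRoot (ν v B H l : ℝ) : Prop :=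
  ν * |l| ≤ 1 ∧ (l - v) ^ 2 - B ^ 2 = H ^ 2 * Real.sqrt (1 - ν ^ 2 * l ^ 2)

variable {ν v B H l : ℝ}

theorem IsDispersionRoot.abs_le_abs_sub (h : IsDispersionRoot ν v B H l) : |B| ≤ |l - v| := by
  have hsq : 0 ≤ (l - v) ^ 2 - B ^ 2 := h.2 ▸ by positivity
  exact sq_le_sq.mp (sub_nonneg.mp hsq)

theorem isDispersionRoot_iff_abs_sub_eq_abs (hl : ν * |l| = 1) :
    IsDispersionRoot ν v B H l ↔ |l - v| = |B| := by
  have hsq : ν ^ 2 * l ^ 2 = 1 := by rw [← sq_abs l, ← mul_pow, hl, one_pow]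
  rw [IsDispersionRoot, hsq, sub_self, Real.sqrt_zero, mul_zero, sub_eq_zero,
    sq_eq_sq_iff_abs_eq_abs, and_iff_right hl.le]

theorem IsDispersionRoot.abs_eq_and_abs_sub_eq (hν : 0 < ν) (hB : |v| + 1 / ν ≤ |B|)
    (h : IsDispersionRoot ν v B H l) : |l| = 1 / ν ∧ |l - v| = |l| + |v| :=
  norm_eq_and_norm_sub_eq_of_add_le (E := ℝ) ((le_div_iff₀' hν).mpr h.1)
    (hB.trans h.abs_le_abs_sub)

theorem isDispersionRoot_iff_abs_eq_and_mul_nonpos (hν : 0 < ν) (hB : |B| = |v| + 1 / ν) :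
    IsDispersionRoot ν v B H l ↔ |l| = 1 / ν ∧ l * v ≤ 0 := by
  rw [← abs_sub_eq_abs_add_abs_iff_mul_nonpos]
  refine ⟨IsDispersionRoot.abs_eq_and_abs_sub_eq hν hB.ge, fun ⟨hl, hlv⟩ ↦ ?_⟩
  have hνl : ν * |l| = 1 := by rw [hl, mul_one_div_cancel hν.ne']
  rw [isDispersionRoot_iff_abs_sub_eq_abs hνl, hlv, hB, hl, add_comm]

end DispersionRoot

/-- If `H ≠ 0` and `|B| = |v| + 1/ν`, then for `v ≠ 0` the unique root `λ` with
`ν|λ| ≤ 1` of the dispersion relation is `λ = −sgn(v)/ν`; for `v = 0` the roots are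
exactly `{1/ν, −1/ν}`; in all cases every root satisfies `|λ| = 1/ν`. -/
theorem roots_at_threshold (ν v B H : ℝ) (hν : 0 < ν) (hH : H ≠ 0)
    (hB : |B| = |v| + 1 / ν) :
    ((v ≠ 0 →
      {l : ℝ | ν * |l| ≤ 1 ∧
        (l - v) ^ 2 - B ^ 2 = H ^ 2 * Real.sqrt (1 - ν ^ 2 * l ^ 2)}
        = {-(Real.sign v) / ν}) ∧
     (v = 0 →
      {l : ℝ | ν * |l| ≤ 1 ∧
        (l - v) ^ 2 - B ^ 2 = H ^ 2 * Real.sqrt (1 - ν ^ 2 * l ^ 2)}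
        = {1 / ν, -(1 / ν)}) ∧
     (∀ l : ℝ, ν * |l| ≤ 1 →
        (l - v) ^ 2 - B ^ 2 = H ^ 2 * Real.sqrt (1 - ν ^ 2 * l ^ 2) →
        |l| = 1 / ν)) := by
  have hroot (l : ℝ) : IsDispersionRoot ν v B H l ↔ |l| = 1 / ν ∧ l * v ≤ 0 :=
    isDispersionRoot_iff_abs_eq_and_mul_nonpos hν hB
  have hr : 0 ≤ 1 / ν := by positivity
  refine ⟨fun hv ↦ Set.ext fun l ↦ (hroot l).trans ?_, fun hv ↦ Set.ext fun l ↦ (hroot l).trans ?_,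
    fun l hl hrel ↦ ((hroot l).mp ⟨hl, hrel⟩).1⟩
  · rw [abs_eq_and_mul_nonpos_iff_eq_neg_sign_mul hv hr, mul_one_div, Set.mem_singleton_iff]
  · rw [hv, mul_zero, and_iff_left le_rfl, abs_eq hr, Set.mem_insert_iff, Set.mem_singleton_iff]
end

section
/- Fix real parameters ν>0, v, B, H with H ≠ 0. If |v| − 1/ν ≤ |B| < |v| + 1/ν, then there exists at least one real number λ with |λ| < 1/ν satisfying the dispersion relation (λ−v)² − B² = H²·√(1−ν²λ²). -/
/-!
By the reflection `λ ↦ -λ`, `v ↦ -v` we may assume `v ≥ 0`. At the left endpoint `-1/ν` the square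
root vanishes and the left-hand side is `(v + 1/ν)² - B² > 0`, so by the intermediate value theorem
it suffices to find a point of `(-1/ν, 1/ν)` where the left-hand side is at most the right-hand
side. If `v - 1/ν < |B|`, the zero `v - |B|` of the left-hand side is such a point. If
`v - 1/ν = |B|`, both sides vanish at `1/ν`; moving a distance `t` into the interval, the left-hand
side is `O(t)`, while the right-hand side is of order `√t` as `H ≠ 0`.
-/

open Set Filter Topology

theorem eventually_mul_lt_sqrt_mul {φ ψ : ℝ → ℝ} (hφ : ContinuousAt φ 0) (hψ : ContinuousAt ψ 0)
    (hψ_pos : 0 < ψ 0) : ∀ᶠ t in 𝓝[>] 0, t * φ t < √(t * ψ t) := by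
  have hlt : ∀ᶠ t in 𝓝 0, t * φ t ^ 2 < ψ t :=
    (continuousAt_id.mul (hφ.pow 2)).eventually_lt hψ (by simpa using hψ_pos)
  filter_upwards [hlt.filter_mono nhdsWithin_le_nhds, self_mem_nhdsWithin] with t ht ht_pos
  refine Real.lt_sqrt_of_sq_lt ?_
  calc (t * φ t) ^ 2 = t * (t * φ t ^ 2) := by ring
    _ < t * ψ t := mul_lt_mul_of_pos_left ht ht_pos

/-- The difference of the two sides of the dispersion relation, whose zeros with `ν * |l| ≤ 1` are
the speeds of surface waves. For `ν * |l| > 1` the square root takes the junk value `0`. -/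
noncomputable def dispersionFun (ν v B H l : ℝ) : ℝ :=
  (l - v) ^ 2 - B ^ 2 - H ^ 2 * √(1 - ν ^ 2 * l ^ 2)

section dispersionFun

variable {ν v B H : ℝ}

theorem dispersionFun_eq_zero_iff {l : ℝ} :
    dispersionFun ν v B H l = 0 ↔ (l - v) ^ 2 - B ^ 2 = H ^ 2 * √(1 - ν ^ 2 * l ^ 2) :=
  sub_eq_zero

theorem continuous_dispersionFun : Continuous (dispersionFun ν v B H) := by
  unfold dispersionFun
  fun_prop

theorem dispersionFun_neg_neg (l : ℝ) :
    dispersionFun ν (-v) B H (-l) = dispersionFun ν v B H l := by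
  unfold dispersionFun
  ring_nf

theorem dispersionFun_neg_one_div (hν : ν ≠ 0) :
    dispersionFun ν v B H (-(1 / ν)) = (v + 1 / ν) ^ 2 - B ^ 2 := by
  have hsqrt : 1 - ν ^ 2 * (-(1 / ν)) ^ 2 = 0 := by field_simp; ring
  rw [dispersionFun, hsqrt, Real.sqrt_zero]
  ring

theorem dispersionFun_sub_abs_nonpos : dispersionFun ν v B H (v - |B|) ≤ 0 := by
  have hzero : (v - |B| - v) ^ 2 - B ^ 2 = 0 := by
    rw [sub_sub_cancel_left, neg_sq, sq_abs, sub_self]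
  rw [dispersionFun, hzero, zero_sub, neg_nonpos]
  positivity

theorem eventually_dispersionFun_one_div_sub_neg (hν : 0 < ν) (hH : H ≠ 0)
    (hB : |v - 1 / ν| ≤ |B|) : ∀ᶠ t in 𝓝[>] 0, dispersionFun ν v B H (1 / ν - t) < 0 := by
  have hsqrt_dominates : ∀ᶠ t in 𝓝[>] 0,
      t * ((t + 2 * (v - 1 / ν)) / H ^ 2) < √(t * (2 * ν - ν ^ 2 * t)) :=
    eventually_mul_lt_sqrt_mul (by fun_prop) (by fun_prop) (by simpa using hν)
  filter_upwards [hsqrt_dominates] with t ht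
  have hradicand : 1 - ν ^ 2 * (1 / ν - t) ^ 2 = t * (2 * ν - ν ^ 2 * t) := by field_simp; ring
  rw [dispersionFun, hradicand, sub_neg]
  calc (1 / ν - t - v) ^ 2 - B ^ 2
      = t * (t + 2 * (v - 1 / ν)) + ((v - 1 / ν) ^ 2 - B ^ 2) := by ring
    _ ≤ t * (t + 2 * (v - 1 / ν)) := add_le_of_nonpos_right (sub_nonpos.2 (sq_le_sq.2 hB))
    _ = H ^ 2 * (t * ((t + 2 * (v - 1 / ν)) / H ^ 2)) := by field_simp
    _ < H ^ 2 * √(t * (2 * ν - ν ^ 2 * t)) := by gcongr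

theorem exists_dispersionFun_nonpos (hν : 0 < ν) (hH : H ≠ 0) (h₁ : v - 1 / ν ≤ |B|)
    (h₂ : |B| < v + 1 / ν) : ∃ l ∈ Ioo (-(1 / ν)) (1 / ν), dispersionFun ν v B H l ≤ 0 := by
  rcases h₁.lt_or_eq with hlt | heq
  · exact ⟨v - |B|, ⟨by linarith, by linarith⟩, dispersionFun_sub_abs_nonpos⟩
  · have hB : |v - 1 / ν| ≤ |B| := by rw [heq, abs_abs]
    have hν_inv : 0 < 1 / ν := one_div_pos.2 hν
    obtain ⟨t, hneg, ht_pos, ht_lt⟩ :=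
      ((eventually_dispersionFun_one_div_sub_neg hν hH hB).and (Ioo_mem_nhdsGT hν_inv)).exists
    exact ⟨1 / ν - t, ⟨by linarith, by linarith⟩, hneg.le⟩

theorem exists_dispersionFun_eq_zero (hν : 0 < ν) (hH : H ≠ 0) (h₁ : v - 1 / ν ≤ |B|)
    (h₂ : |B| < v + 1 / ν) : ∃ l, |l| < 1 / ν ∧ dispersionFun ν v B H l = 0 := by
  obtain ⟨l₀, ⟨hl₀_gt, hl₀_lt⟩, hnonpos⟩ := exists_dispersionFun_nonpos hν hH h₁ h₂
  have hpos : 0 < dispersionFun ν v B H (-(1 / ν)) := by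
    rw [dispersionFun_neg_one_div hν.ne', sub_pos, sq_lt_sq]
    exact h₂.trans_le (le_abs_self _)
  obtain ⟨l, ⟨hl_gt, hl_le⟩, hl⟩ :=
    intermediate_value_Ioc' hl₀_gt.le continuous_dispersionFun.continuousOn ⟨hnonpos, hpos⟩
  exact ⟨l, abs_lt.2 ⟨hl_gt, hl_le.trans_lt hl₀_lt⟩, hl⟩

end dispersionFun

/-- If `H ≠ 0` and `|v| − 1/ν ≤ |B| < |v| + 1/ν`, there exists at least one real root
`λ` with `|λ| < 1/ν` of the dispersion relation `(λ−v)² − B² = H²·√(1−ν²λ²)`. -/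
theorem exists_root_intermediate (ν v B H : ℝ) (hν : 0 < ν) (hH : H ≠ 0)
    (h1 : |v| - 1 / ν ≤ |B|) (h2 : |B| < |v| + 1 / ν) :
    ∃ l : ℝ, |l| < 1 / ν ∧
      (l - v) ^ 2 - B ^ 2 = H ^ 2 * Real.sqrt (1 - ν ^ 2 * l ^ 2) := by
  simp only [← dispersionFun_eq_zero_iff]
  obtain ⟨l, hl_lt, hl⟩ := exists_dispersionFun_eq_zero hν hH h1 h2
  rcases abs_choice v with hv | hv <;> rw [hv] at hl
  · exact ⟨l, hl_lt, hl⟩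
  · refine ⟨-l, by rwa [abs_neg], ?_⟩
    rwa [← dispersionFun_neg_neg, neg_neg]
end

section
/- Fix real parameters ν>0, v, B with |B| < |v| − 1/ν. Then there exists H* > 0 such that: (i) for every real H with |H| > H* there exist at least two distinct real numbers λ with |λ| < 1/ν satisfying the dispersion relation (λ−v)² − B² = H²·√(1−ν²λ²); and (ii) for every real H with 0 < |H| < H* there is no real λ with ν|λ| ≤ 1 satisfying this relation. -/
/-!
Because `|B| < |v| - 1 / ν`, the function `p l = (l - v) ^ 2 - B ^ 2` is positive on
`[-1 / ν, 1 / ν]`, while `s l = √(1 - ν ^ 2 * l ^ 2)` vanishes at both ends and is positive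
inside; the dispersion relation is `p l = H ^ 2 * s l`. As `t` increases from `0`, the graph of
`t * s` lies strictly below that of `p` until it first touches it, at `t = c := 1 / max (s / p)`.
For `t > c` it is above `p` at the point of contact and below `p` at both ends, so it crosses `p`
on either side of that point. The critical field is `√c`.
-/

open Set

section IntermediateValue

variable {α β : Type*} [ConditionallyCompleteLinearOrder α] [TopologicalSpace α]
  [OrderTopology α] [DenselyOrdered α] [LinearOrder β] [TopologicalSpace β]
  [OrderClosedTopology β] {f g : α → β} {a b x : α}

theorem exists_mem_Ioo_eq_of_lt_of_gt (hab : a ≤ b) (hf : ContinuousOn f (Icc a b))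
    (hg : ContinuousOn g (Icc a b)) (ha : f a < g a) (hb : g b < f b) :
    ∃ y ∈ Ioo a b, f y = g y := by
  obtain ⟨y, hy, hfg⟩ := isPreconnected_Icc.intermediate_value₂ (left_mem_Icc.2 hab)
    (right_mem_Icc.2 hab) hf hg ha.le hb.le
  refine ⟨y, ⟨hy.1.lt_of_ne ?_, hy.2.lt_of_ne ?_⟩, hfg⟩
  · rintro rfl
    exact ha.ne hfg
  · rintro rfl
    exact hb.ne' hfg

theorem exists_lt_eq_eq_of_lt_of_gt_of_lt (hx : x ∈ Icc a b) (hf : ContinuousOn f (Icc a b))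
    (hg : ContinuousOn g (Icc a b)) (ha : f a < g a) (hfx : g x < f x) (hb : f b < g b) :
    ∃ y ∈ Ioo a b, ∃ z ∈ Ioo a b, y < z ∧ f y = g y ∧ f z = g z := by
  have hleft : Icc a x ⊆ Icc a b := Icc_subset_Icc_right hx.2
  have hright : Icc x b ⊆ Icc a b := Icc_subset_Icc_left hx.1
  obtain ⟨y, hy, hfgy⟩ :=
    exists_mem_Ioo_eq_of_lt_of_gt hx.1 (hf.mono hleft) (hg.mono hleft) ha hfx
  obtain ⟨z, hz, hgfz⟩ :=
    exists_mem_Ioo_eq_of_lt_of_gt hx.2 (hg.mono hright) (hf.mono hright) hfx hb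
  exact ⟨y, Ioo_subset_Ioo_right hx.2 hy, z, Ioo_subset_Ioo_left hx.1 hz, hy.2.trans hz.1,
    hfgy, hgfz.symm⟩

end IntermediateValue

/-- The value `c` of the parameter at which, as `t` increases from `0`, the graph of `t * s` first
touches the graph of `p` over `K`. It is the threshold for the solvability of `p x = t * s x`
in `K` when `p` is positive there. -/
structure IsCriticalCoupling {X : Type*} (p s : X → ℝ) (K : Set X) (c : ℝ) : Prop where
  pos : 0 < c
  mul_le : ∀ x ∈ K, c * s x ≤ p x
  exists_eq : ∃ x ∈ K, p x = c * s x

theorem exists_isCriticalCoupling {X : Type*} [TopologicalSpace X] {K : Set X} {p s : X → ℝ}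
    (hK : IsCompact K) (hp : ContinuousOn p K) (hs : ContinuousOn s K)
    (hp_pos : ∀ x ∈ K, 0 < p x) (hs_pos : ∃ x ∈ K, 0 < s x) :
    ∃ c, IsCriticalCoupling p s K c := by
  obtain ⟨x₁, hx₁, hsx₁⟩ := hs_pos
  obtain ⟨x₀, hx₀, hmax⟩ := hK.exists_isMaxOn ⟨x₁, hx₁⟩ (hs.div hp fun x hx ↦ (hp_pos x hx).ne')
  have hratio : ∀ x ∈ K, s x / p x ≤ s x₀ / p x₀ := fun x hx ↦ hmax hx
  have hsx₀ : 0 < s x₀ :=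
    (div_pos_iff_of_pos_right (hp_pos x₀ hx₀)).1 <|
      (div_pos hsx₁ (hp_pos x₁ hx₁)).trans_le (hratio x₁ hx₁)
  refine ⟨p x₀ / s x₀, div_pos (hp_pos x₀ hx₀) hsx₀, fun x hx ↦ ?_,
    x₀, hx₀, (div_mul_cancel₀ _ hsx₀.ne').symm⟩
  have hcross : s x * p x₀ ≤ s x₀ * p x :=
    (div_le_div_iff₀ (hp_pos x hx) (hp_pos x₀ hx₀)).1 (hratio x hx)
  rw [div_mul_eq_mul_div, div_le_iff₀ hsx₀]
  linarith

namespace IsCriticalCoupling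

variable {X : Type*} {p s : X → ℝ} {K : Set X} {c t : ℝ}

theorem mul_lt {x : X} (hc : IsCriticalCoupling p s K c) (hx : x ∈ K) (hp : 0 < p x)
    (ht₀ : 0 ≤ t) (ht : t < c) : t * s x < p x := by
  rcases le_or_gt (s x) 0 with hs | hs
  · exact (mul_nonpos_of_nonneg_of_nonpos ht₀ hs).trans_lt hp
  · exact (mul_lt_mul_of_pos_right ht hs).trans_le (hc.mul_le x hx)

theorem exists_lt_mul (hc : IsCriticalCoupling p s K c) (hp : ∀ x ∈ K, 0 < p x) (ht : c < t) :
    ∃ x ∈ K, p x < t * s x := by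
  obtain ⟨x, hx, hpx⟩ := hc.exists_eq
  have hs : 0 < s x := pos_of_mul_pos_right (hpx ▸ hp x hx) hc.pos.le
  exact ⟨x, hx, hpx.trans_lt (mul_lt_mul_of_pos_right ht hs)⟩

theorem exists_lt_eq_mul [ConditionallyCompleteLinearOrder X] [TopologicalSpace X]
    [OrderTopology X] [DenselyOrdered X] {a b : X}
    (hc : IsCriticalCoupling p s (Icc a b) c) (hp : ContinuousOn p (Icc a b))
    (hs : ContinuousOn s (Icc a b)) (hp_pos : ∀ x ∈ Icc a b, 0 < p x) (ha : s a ≤ 0)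
    (hb : s b ≤ 0) (ht : c < t) :
    ∃ y ∈ Ioo a b, ∃ z ∈ Ioo a b, y < z ∧ p y = t * s y ∧ p z = t * s z := by
  obtain ⟨x, hx, hpx⟩ := hc.exists_lt_mul hp_pos ht
  have hab : a ≤ b := hx.1.trans hx.2
  have ht₀ : 0 ≤ t := (hc.pos.trans ht).le
  have hta : t * s a < p a :=
    (mul_nonpos_of_nonneg_of_nonpos ht₀ ha).trans_lt (hp_pos a (left_mem_Icc.2 hab))
  have htb : t * s b < p b :=
    (mul_nonpos_of_nonneg_of_nonpos ht₀ hb).trans_lt (hp_pos b (right_mem_Icc.2 hab))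
  obtain ⟨y, hy, z, hz, hyz, hty, htz⟩ :=
    exists_lt_eq_eq_of_lt_of_gt_of_lt hx (continuousOn_const.mul hs) hp hta hpx htb
  exact ⟨y, hy, z, hz, hyz, hty.symm, htz.symm⟩

end IsCriticalCoupling

theorem sq_sub_sq_pos_of_abs_lt_abs_sub {a v B l : ℝ} (hB : |B| < |v| - a) (hl : |l| ≤ a) :
    0 < (l - v) ^ 2 - B ^ 2 := by
  have hBl : |B| < |l - v| :=
    calc |B| < |v| - a := hB
      _ ≤ |v| - |l| := sub_le_sub_left hl _
      _ ≤ |v - l| := abs_sub_abs_le_abs_sub v l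
      _ = |l - v| := abs_sub_comm v l
  exact sub_pos.2 (sq_lt_sq.2 hBl)

theorem sqrt_one_sub_sq_mul_sq_eq_zero {ν l : ℝ} (hν : ν ≠ 0) (hl : |l| = 1 / ν) :
    √(1 - ν ^ 2 * l ^ 2) = 0 := by
  rw [← sq_abs l, hl, ← mul_pow, mul_one_div_cancel hν]
  simp

/-- If `|B| < |v| − 1/ν` then there exists `H* > 0` such that for `|H| > H*` there are
at least two distinct roots `λ` with `|λ| < 1/ν` of the dispersion relation, while for
`0 < |H| < H*` there is no root with `ν|λ| ≤ 1`. -/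
theorem critical_vacuum_field (ν v B : ℝ) (hν : 0 < ν) (hB : |B| < |v| - 1 / ν) :
    ∃ Hstar : ℝ, 0 < Hstar ∧
      (∀ H : ℝ, |H| > Hstar →
        ∃ l₁ l₂ : ℝ, l₁ ≠ l₂ ∧ |l₁| < 1 / ν ∧ |l₂| < 1 / ν ∧
          (l₁ - v) ^ 2 - B ^ 2 = H ^ 2 * Real.sqrt (1 - ν ^ 2 * l₁ ^ 2) ∧
          (l₂ - v) ^ 2 - B ^ 2 = H ^ 2 * Real.sqrt (1 - ν ^ 2 * l₂ ^ 2)) ∧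
      (∀ H : ℝ, 0 < |H| → |H| < Hstar →
        ¬ ∃ l : ℝ, ν * |l| ≤ 1 ∧
          (l - v) ^ 2 - B ^ 2 = H ^ 2 * Real.sqrt (1 - ν ^ 2 * l ^ 2)) := by
  set p : ℝ → ℝ := fun l ↦ (l - v) ^ 2 - B ^ 2
  set s : ℝ → ℝ := fun l ↦ √(1 - ν ^ 2 * l ^ 2)
  have hp : Continuous p := by fun_prop
  have hs : Continuous s := by fun_prop
  have hp_pos : ∀ l ∈ Icc (-(1 / ν)) (1 / ν), 0 < p l := fun l hl ↦
    sq_sub_sq_pos_of_abs_lt_abs_sub hB (abs_le.2 hl)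
  have hν_inv : 0 < 1 / ν := one_div_pos.2 hν
  obtain ⟨c, hc⟩ := exists_isCriticalCoupling isCompact_Icc hp.continuousOn hs.continuousOn hp_pos
    ⟨0, ⟨by linarith, hν_inv.le⟩, by simp [s]⟩
  refine ⟨√c, Real.sqrt_pos.2 hc.pos, fun H hH ↦ ?_, ?_⟩
  · have hcH : c < H ^ 2 := sq_abs H ▸ Real.lt_sq_of_sqrt_lt hH
    have hs_ends : ∀ l, |l| = 1 / ν → s l ≤ 0 := fun l hl ↦
      (sqrt_one_sub_sq_mul_sq_eq_zero hν.ne' hl).le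
    obtain ⟨l₁, hl₁, l₂, hl₂, hlt, h₁, h₂⟩ :=
      hc.exists_lt_eq_mul hp.continuousOn hs.continuousOn hp_pos
        (hs_ends _ (by rw [abs_neg, abs_of_pos hν_inv])) (hs_ends _ (abs_of_pos hν_inv)) hcH
    exact ⟨l₁, l₂, hlt.ne, abs_lt.2 hl₁, abs_lt.2 hl₂, h₁, h₂⟩
  · rintro H - hH ⟨l, hl, hroot⟩
    have hHc : H ^ 2 < c := sq_abs H ▸ (Real.lt_sqrt (abs_nonneg H)).1 hH
    have hl_mem : l ∈ Icc (-(1 / ν)) (1 / ν) := abs_le.1 ((le_div_iff₀' hν).2 hl)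
    exact (hc.mul_lt hl_mem (hp_pos l hl_mem) (sq_nonneg H) hHc).ne' hroot
end

section
/- Fix σ ∈ ℝ. Define Λ̃(k,ℓ) for real k, ℓ with (k,ℓ) ≠ (0,0) and k+ℓ ≠ 0 by Λ̃(k,ℓ) = (1/2)[ (k−ℓ)(|k|ℓ − k|ℓ|)/(|k+ℓ|+|k|+|ℓ|) − kℓ|ℓ|/(|k+ℓ|+|ℓ|) − |k|kℓ/(|k+ℓ|+|k|) + σ(k² + ℓ² + kℓ − |kℓ|) ] + (1/2)·sgn(k+ℓ)·[ (|k|−|ℓ|)(|k|ℓ − k|ℓ|)/(|k+ℓ|+|k|+|ℓ|) + kℓ²/(|k+ℓ|+|ℓ|) + k²ℓ/(|k+ℓ|+|k|) − k|ℓ| − |k|ℓ − σ(k+ℓ)(|k|+|ℓ|) ]. Then for all such (k,ℓ), Λ̃(k,ℓ) = −(1+σ) · 2|k+ℓ|·|k|·|ℓ| / (|k+ℓ|+|k|+|ℓ|). In particular Λ̃(k,ℓ) = −(1+σ)kℓ whenever k>0 and ℓ>0, and Λ̃(k,ℓ) = (1+σ)ℓ(k+ℓ) whenever k+ℓ>0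 and ℓ<0. -/
/-- The symmetrized kernel `Λ̃` of the amplitude equation. -/
noncomputable def LamTilde (σ k l : ℝ) : ℝ :=
  (1 / 2) * ((k - l) * (|k| * l - k * |l|) / (|k + l| + |k| + |l|)
      - k * l * |l| / (|k + l| + |l|)
      - |k| * k * l / (|k + l| + |k|)
      + σ * (k ^ 2 + l ^ 2 + k * l - |k * l|))
  + (1 / 2) * Real.sign (k + l) *
      ((|k| - |l|) * (|k| * l - k * |l|) / (|k + l| + |k| + |l|)
        + k * l ^ 2 / (|k + l| + |l|)
        + k ^ 2 * l / (|k + l| + |k|)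
        - k * |l| - |k| * l
        - σ * (k + l) * (|k| + |l|))

/-!
The kernel is symmetric and even, so one may assume `0 < k + l` and `l ≤ k`; then `0 < k`. With
`Real.sign (k + l) = 1` the two brackets merge, and the quotient over `|k + l| + |k|` acquires the
factor `k - |k| = 0`. What remains is elementary on each of the sectors `0 ≤ l` and `l ≤ 0`. There
the largest of `|k + l|`, `|k|`, `|l|` is the sum of the other two, so
`2 * |k + l| * |k| * |l| / (|k + l| + |k| + |l|)` is just the product of the two smaller ones.
-/

section Kernels

/-- The kernel of Hamilton, Ilinskii and Zabolotskaya for nonlinear surface waves, to which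
`LamTilde` reduces up to a constant factor. At `k = l = 0` division by zero gives it the
value `0`. -/
noncomputable def hizKernel (k l : ℝ) : ℝ :=
  2 * |k + l| * |k| * |l| / (|k + l| + |k| + |l|)

variable (σ k l : ℝ)

theorem hizKernel_comm : hizKernel k l = hizKernel l k := by
  unfold hizKernel
  rw [add_comm l k]
  ring

theorem hizKernel_neg_neg : hizKernel (-k) (-l) = hizKernel k l := by
  unfold hizKernel
  rw [← neg_add]
  simp only [abs_neg]

theorem lamTilde_comm : LamTilde σ k l = LamTilde σ l k := by
  unfold LamTilde
  rw [add_comm l k, mul_comm l k]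
  ring

theorem lamTilde_neg_neg : LamTilde σ (-k) (-l) = LamTilde σ k l := by
  unfold LamTilde
  rw [← neg_add, Real.sign_neg, neg_mul_neg]
  simp only [abs_neg]
  ring

variable {k l}

theorem hizKernel_of_nonneg (hk : 0 ≤ k) (hl : 0 ≤ l) (hkl : 0 < k + l) :
    hizKernel k l = k * l := by
  unfold hizKernel
  rw [abs_of_pos hkl, abs_of_nonneg hk, abs_of_nonneg hl, div_eq_iff (by positivity)]
  ring

theorem hizKernel_of_nonpos_right (hl : l ≤ 0) (hkl : 0 < k + l) :
    hizKernel k l = -l * (k + l) := by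
  have hk : 0 < k := by linarith
  unfold hizKernel
  rw [abs_of_pos hkl, abs_of_pos hk, abs_of_nonpos hl, div_eq_iff (by linarith)]
  ring

theorem lamTilde_of_add_pos (hkl : 0 < k + l) :
    LamTilde σ k l =
      (1 / 2) * ((k + |k| - (l + |l|)) * (|k| * l - k * |l|) / (k + l + |k| + |l|)
        + k * l * (l - |l|) / (k + l + |l|)
        + k * l * (k - |k|) / (k + l + |k|)
        - (k * |l| + |k| * l)
        + σ * (k ^ 2 + l ^ 2 + k * l - |k * l| - (k + l) * (|k| + |l|))) := by
  unfold LamTilde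
  rw [Real.sign_of_pos hkl, abs_of_pos hkl]
  ring

theorem lamTilde_of_nonneg (hk : 0 ≤ k) (hl : 0 ≤ l) (hkl : 0 < k + l) :
    LamTilde σ k l = -(1 + σ) * (k * l) := by
  rw [lamTilde_of_add_pos σ hkl, abs_of_nonneg (mul_nonneg hk hl), abs_of_nonneg hk,
    abs_of_nonneg hl]
  ring

theorem lamTilde_of_nonpos_right (hl : l ≤ 0) (hkl : 0 < k + l) :
    LamTilde σ k l = (1 + σ) * (l * (k + l)) := by
  have hk : 0 < k := by linarith
  have hsum : k + l + k + -l = 2 * k := by ring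
  have hright : k + l + -l = k := by ring
  rw [lamTilde_of_add_pos σ hkl, abs_of_nonpos (mul_nonpos_of_nonneg_of_nonpos hk.le hl),
    abs_of_pos hk, abs_of_nonpos hl, hsum, hright, sub_self, mul_zero, zero_div]
  field_simp
  ring

theorem lamTilde_eq_neg_mul_hizKernel (hkl : k + l ≠ 0) :
    LamTilde σ k l = -(1 + σ) * hizKernel k l := by
  wlog hpos : 0 < k + l generalizing k l
  · have hneg : 0 < -k + -l := by linarith [lt_of_le_of_ne (not_lt.mp hpos) hkl]
    rw [← lamTilde_neg_neg, ← hizKernel_neg_neg, this hneg.ne' hneg]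
  wlog hlk : l ≤ k generalizing k l
  · rw [add_comm] at hkl hpos
    rw [lamTilde_comm, hizKernel_comm, this hkl hpos (le_of_not_ge hlk)]
  rcases le_total 0 l with hl | hl
  · have hk : 0 ≤ k := hl.trans hlk
    rw [lamTilde_of_nonneg σ hk hl hpos, hizKernel_of_nonneg hk hl hpos]
  · rw [lamTilde_of_nonpos_right σ hl hpos, hizKernel_of_nonpos_right hl hpos]
    ring

end Kernels

/-- For `(k,ℓ) ≠ (0,0)` and `k+ℓ ≠ 0`, the symmetrized kernel simplifies to
`Λ̃(k,ℓ) = −(1+σ)·2|k+ℓ||k||ℓ|/(|k+ℓ|+|k|+|ℓ|)`; in particular `Λ̃(k,ℓ) = −(1+σ)kℓ`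
for `k,ℓ > 0` and `Λ̃(k,ℓ) = (1+σ)ℓ(k+ℓ)` for `k+ℓ > 0`, `ℓ < 0`. -/
theorem lamTilde_simplification (σ : ℝ) :
    (∀ k l : ℝ, (k, l) ≠ (0, 0) → k + l ≠ 0 →
      LamTilde σ k l = -(1 + σ) * (2 * |k + l| * |k| * |l|) / (|k + l| + |k| + |l|)) ∧
    (∀ k l : ℝ, 0 < k → 0 < l → LamTilde σ k l = -(1 + σ) * (k * l)) ∧
    (∀ k l : ℝ, 0 < k + l → l < 0 → LamTilde σ k l = (1 + σ) * (l * (k + l))) := by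
  refine ⟨fun k l _ hkl => ?_,
    fun k l hk hl => lamTilde_of_nonneg σ hk.le hl.le (add_pos hk hl),
    fun k l hkl hl => lamTilde_of_nonpos_right σ hl.le hkl⟩
  rw [lamTilde_eq_neg_mul_hizKernel σ hkl, hizKernel, ← mul_div_assoc]
end

section
/- Define S:ℝ²→ℝ by S(k,ℓ) = Λ(k,ℓ)/|kℓ(k+ℓ)|^{1/2} if kℓ(k+ℓ) ≠ 0 and S(k,ℓ) = 0 otherwise, where Λ(k,ℓ) = 2|k+ℓ|·|k|·|ℓ|/(|k+ℓ|+|k|+|ℓ|) for (k,ℓ) ≠ (0,0) and Λ(0,0) = 0. Then for all real k, ℓ one has |S(k−ℓ,ℓ)| ≤ min{ |k|^{1/2}, |k−ℓ|^{1/2}, |ℓ|^{1/2} }. -/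
/-- The kernel `Λ` of the surface-wave amplitude equation. -/
noncomputable def Lam (k l : ℝ) : ℝ :=
  if (k, l) = ((0 : ℝ), (0 : ℝ)) then 0
  else 2 * |k + l| * |k| * |l| / (|k + l| + |k| + |l|)

/-- The kernel `S` of the noncanonical form of the amplitude equation. -/
noncomputable def Sker (k l : ℝ) : ℝ :=
  if k * l * (k + l) ≠ 0 then Lam k l / Real.sqrt |k * l * (k + l)| else 0

/-!
Since `x / √x = √x`, the kernel is `S(k, ℓ) = 2√(abc) / (a + b + c)` with `a = |k + ℓ|`, `b = |k|`,
`c = |ℓ|`. The AM-GM inequality `2√(bc) ≤ b + c` bounds this by `√a`, and then its symmetry in `a`,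
`b`, `c` gives the bounds by `√b` and `√c`.
-/

-- At the origin the right-hand side is `0 / 0 = 0`.
theorem lam_eq_div (k l : ℝ) :
    Lam k l = 2 * |k * l * (k + l)| / (|k + l| + |k| + |l|) := by
  unfold Lam
  split_ifs with h
  · obtain ⟨rfl, rfl⟩ := Prod.mk.inj h
    simp
  · rw [abs_mul, abs_mul]
    ring

theorem sker_eq_sqrt_div (k l : ℝ) :
    Sker k l = 2 * √(|k + l| * |k| * |l|) / (|k + l| + |k| + |l|) := by
  have habs : |k + l| * |k| * |l| = |k * l * (k + l)| := by
    rw [abs_mul, abs_mul]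
    ring
  rw [habs, Sker]
  split_ifs with h
  · rw [lam_eq_div, div_right_comm, mul_div_assoc, Real.div_sqrt]
  · simp [not_not.mp h]

section SymmetricBound

variable {a b c : ℝ}

theorem two_mul_sqrt_mul_div_add_le_sqrt (ha : 0 ≤ a) (hb : 0 ≤ b) (hc : 0 ≤ c) :
    2 * √(a * b * c) / (a + b + c) ≤ √a := by
  have amgm : 2 * √(b * c) ≤ b + c :=
    two_mul_le_add_of_sq_le_mul hb hc (Real.sq_sqrt (mul_nonneg hb hc)).le
  refine div_le_of_le_mul₀ (by positivity) (by positivity) ?_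
  calc 2 * √(a * b * c) = √a * (2 * √(b * c)) := by
        rw [mul_assoc, Real.sqrt_mul ha, mul_left_comm]
    _ ≤ √a * (b + c) := by gcongr
    _ ≤ √a * (a + b + c) := by gcongr; linarith

theorem two_mul_sqrt_mul_div_add_le_min_sqrt (ha : 0 ≤ a) (hb : 0 ≤ b) (hc : 0 ≤ c) :
    2 * √(a * b * c) / (a + b + c) ≤ min √a (min √b √c) := by
  refine le_min (two_mul_sqrt_mul_div_add_le_sqrt ha hb hc) (le_min ?_ ?_)
  · rw [mul_comm a b, add_comm a b]
    exact two_mul_sqrt_mul_div_add_le_sqrt hb ha hc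
  · rw [mul_comm (a * b) c, ← mul_assoc, add_comm (a + b) c, ← add_assoc]
    exact two_mul_sqrt_mul_div_add_le_sqrt hc ha hb

end SymmetricBound

/-- The pointwise bound `|S(k−ℓ,ℓ)| ≤ min{|k|^{1/2}, |k−ℓ|^{1/2}, |ℓ|^{1/2}}`. -/
theorem sker_min_bound :
    ∀ k l : ℝ,
      |Sker (k - l) l| ≤
        min (Real.sqrt |k|) (min (Real.sqrt |k - l|) (Real.sqrt |l|)) := by
  intro k l
  rw [sker_eq_sqrt_div, sub_add_cancel, abs_of_nonneg (by positivity)]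
  exact two_mul_sqrt_mul_div_add_le_min_sqrt (abs_nonneg k) (abs_nonneg (k - l)) (abs_nonneg l)
end

section
/- For every real s > 0 there exists a constant C_s > 0 such that for all real numbers k and ℓ: | k|k|^{2s} − (k−ℓ)|k−ℓ|^{2s} − ℓ|ℓ|^{2s} | ≤ C_s ( |k|^s |k−ℓ|^s |ℓ| + |k|^s |k−ℓ| |ℓ|^s + |k| |k−ℓ|^s |ℓ|^s ). -/
/-!
Put `a = k`, `b = -(k - l)`, `c = -l` and `p = 2 * s`. Both sides of the estimate are then symmetric
functions of three vectors with `a + b + c = 0`, so one may assume `‖c‖ ≤ ‖b‖ ≤ ‖a‖`. Substituting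
`a = -(b + c)`, the sum of the three terms `‖x‖ ^ p • x` becomes
`(‖b‖ ^ p - ‖a‖ ^ p) • b + (‖c‖ ^ p - ‖a‖ ^ p) • c`. The second term is at most `‖a‖ ^ p * ‖c‖`, and
the first is at most `p * ‖a‖ ^ p * (‖a‖ - ‖b‖) ≤ p * ‖a‖ ^ p * ‖c‖` by Young's inequality. Finally
`‖a‖ ≤ 2 * ‖b‖` turns one factor of `‖a‖ ^ (2 * s) = ‖a‖ ^ s * ‖a‖ ^ s` into `2 ^ s * ‖b‖ ^ s`.
-/

theorem mul_rpow_sub_rpow_le {p u v : ℝ} (hp : 0 ≤ p) (hu : 0 ≤ u) (hv : 0 ≤ v) :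
    v * (u ^ p - v ^ p) ≤ p * u ^ p * (u - v) := by
  have hp' : 0 < p + 1 := by positivity
  have young : v * u ^ p ≤ 1 / (p + 1) * v ^ (p + 1) + p / (p + 1) * u ^ (p + 1) := by
    have amgm := Real.geom_mean_le_arith_mean2_weighted (w₁ := 1 / (p + 1)) (w₂ := p / (p + 1))
      (p₁ := v ^ (p + 1)) (p₂ := u ^ (p + 1))
      (by positivity) (by positivity) (by positivity) (by positivity) (by field_simp; ring)
    rwa [← Real.rpow_mul hv, ← Real.rpow_mul hu, mul_one_div_cancel hp'.ne',
      mul_div_cancel₀ _ hp'.ne', Real.rpow_one] at amgm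
  rw [Real.rpow_add_one' hv hp'.ne', Real.rpow_add_one' hu hp'.ne'] at young
  field_simp at young
  linarith

theorem norm_le_norm_add_norm_of_add_add_eq_zero {E : Type*} [SeminormedAddCommGroup E]
    {a b c : E} (h : a + b + c = 0) : ‖a‖ ≤ ‖b‖ + ‖c‖ := by
  rw [add_assoc, add_eq_zero_iff_eq_neg] at h
  simpa only [h, norm_neg] using norm_add_le b c

section NormedSpace

variable {E : Type*} [SeminormedAddCommGroup E] [NormedSpace ℝ E] {a b c : E}

theorem norm_rpow_smul_add_add_le {p : ℝ} (hp : 0 ≤ p) (h : a + b + c = 0)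
    (hba : ‖b‖ ≤ ‖a‖) (hca : ‖c‖ ≤ ‖a‖) :
    ‖‖a‖ ^ p • a + ‖b‖ ^ p • b + ‖c‖ ^ p • c‖ ≤ (p + 1) * (‖a‖ ^ p * ‖c‖) := by
  have hb : ‖b‖ ^ p ≤ ‖a‖ ^ p := by gcongr
  have hc : ‖c‖ ^ p ≤ ‖a‖ ^ p := by gcongr
  have regroup : ‖a‖ ^ p • a + ‖b‖ ^ p • b + ‖c‖ ^ p • c =
      (‖b‖ ^ p - ‖a‖ ^ p) • b + (‖c‖ ^ p - ‖a‖ ^ p) • c := by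
    linear_combination (norm := module) ‖a‖ ^ p • h
  calc ‖‖a‖ ^ p • a + ‖b‖ ^ p • b + ‖c‖ ^ p • c‖
      ≤ ‖b‖ * (‖a‖ ^ p - ‖b‖ ^ p) + (‖a‖ ^ p - ‖c‖ ^ p) * ‖c‖ := by
        rw [regroup]
        refine (norm_add_le _ _).trans_eq ?_
        rw [norm_smul, norm_smul, Real.norm_of_nonpos (sub_nonpos.2 hb),
          Real.norm_of_nonpos (sub_nonpos.2 hc), neg_sub, neg_sub, mul_comm ‖b‖]
    _ ≤ p * ‖a‖ ^ p * (‖a‖ - ‖b‖) + ‖a‖ ^ p * ‖c‖ := by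
        refine add_le_add (mul_rpow_sub_rpow_le hp (norm_nonneg a) (norm_nonneg b)) ?_
        exact mul_le_mul_of_nonneg_right (sub_le_self _ (by positivity)) (norm_nonneg c)
    _ ≤ p * ‖a‖ ^ p * ‖c‖ + ‖a‖ ^ p * ‖c‖ := by
        gcongr
        exact sub_le_iff_le_add'.2 (norm_le_norm_add_norm_of_add_add_eq_zero h)
    _ = (p + 1) * (‖a‖ ^ p * ‖c‖) := by ring

theorem norm_rpow_two_mul_smul_add_add_le_of_le {s : ℝ} (hs : 0 ≤ s) (h : a + b + c = 0)
    (hba : ‖b‖ ≤ ‖a‖) (hcb : ‖c‖ ≤ ‖b‖) :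
    ‖‖a‖ ^ (2 * s) • a + ‖b‖ ^ (2 * s) • b + ‖c‖ ^ (2 * s) • c‖ ≤
      (2 * s + 1) * 2 ^ s * (‖a‖ ^ s * ‖b‖ ^ s * ‖c‖) := by
  have hab : ‖a‖ ≤ 2 * ‖b‖ := by linarith [norm_le_norm_add_norm_of_add_add_eq_zero h]
  calc ‖‖a‖ ^ (2 * s) • a + ‖b‖ ^ (2 * s) • b + ‖c‖ ^ (2 * s) • c‖
      ≤ (2 * s + 1) * (‖a‖ ^ (2 * s) * ‖c‖) :=
        norm_rpow_smul_add_add_le (by positivity) h hba (hcb.trans hba)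
    _ = (2 * s + 1) * (‖a‖ ^ s * ‖a‖ ^ s * ‖c‖) := by
        rw [two_mul s, Real.rpow_add_of_nonneg (norm_nonneg a) hs hs]
    _ ≤ (2 * s + 1) * (‖a‖ ^ s * (2 * ‖b‖) ^ s * ‖c‖) := by gcongr
    _ = (2 * s + 1) * 2 ^ s * (‖a‖ ^ s * ‖b‖ ^ s * ‖c‖) := by
        rw [Real.mul_rpow zero_le_two (norm_nonneg b)]
        ring

theorem norm_rpow_two_mul_smul_add_add_le {s : ℝ} (hs : 0 ≤ s) (h : a + b + c = 0) :
    ‖‖a‖ ^ (2 * s) • a + ‖b‖ ^ (2 * s) • b + ‖c‖ ^ (2 * s) • c‖ ≤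
      (2 * s + 1) * 2 ^ s *
        (‖a‖ ^ s * ‖b‖ ^ s * ‖c‖ + ‖a‖ ^ s * ‖b‖ * ‖c‖ ^ s + ‖a‖ * ‖b‖ ^ s * ‖c‖ ^ s) := by
  wlog hba : ‖b‖ ≤ ‖a‖ generalizing a b
  · convert this (a := b) (b := a) (by rwa [add_comm b]) (le_of_not_ge hba) using 1
    · rw [add_comm (‖b‖ ^ (2 * s) • b)]
    · ring
  wlog hcb : ‖c‖ ≤ ‖b‖ generalizing a b c
  · have hbc := le_of_not_ge hcb
    rcases le_total ‖c‖ ‖a‖ with hca | hac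
    · convert this (a := a) (b := c) (c := b) (by rwa [add_right_comm]) hca hbc using 1
      · rw [add_right_comm]
      · ring
    · convert this (a := c) (b := a) (c := b) (by rwa [add_rotate]) hac hba using 1
      · rw [add_rotate (‖c‖ ^ (2 * s) • c)]
      · ring
  refine (norm_rpow_two_mul_smul_add_add_le_of_le hs h hba hcb).trans ?_
  gcongr
  rw [add_assoc]
  exact le_add_of_nonneg_right (by positivity)

theorem symbol_commutator_estimate_general (E : Type*) [SeminormedAddCommGroup E]
    [NormedSpace ℝ E] {s : ℝ} (hs : 0 ≤ s) :
    ∃ C : ℝ, 0 < C ∧ ∀ k l : E,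
      ‖‖k‖ ^ (2 * s) • k - ‖k - l‖ ^ (2 * s) • (k - l) - ‖l‖ ^ (2 * s) • l‖ ≤
        C * (‖k‖ ^ s * ‖k - l‖ ^ s * ‖l‖ + ‖k‖ ^ s * ‖k - l‖ * ‖l‖ ^ s +
          ‖k‖ * ‖k - l‖ ^ s * ‖l‖ ^ s) := by
  refine ⟨(2 * s + 1) * 2 ^ s, by positivity, fun k l => ?_⟩
  have h : k + -(k - l) + -l = 0 := by abel
  simpa only [norm_neg, smul_neg, ← sub_eq_add_neg] using
    norm_rpow_two_mul_smul_add_add_le hs h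

end NormedSpace

/-- For every `s > 0` there is `C_s > 0` such that for all real `k, ℓ`:
`|k|k|^{2s} − (k−ℓ)|k−ℓ|^{2s} − ℓ|ℓ|^{2s}| ≤ C_s(|k|^s|k−ℓ|^s|ℓ| + |k|^s|k−ℓ||ℓ|^s + |k||k−ℓ|^s|ℓ|^s)`. -/
theorem symbol_commutator_estimate (s : ℝ) (hs : 0 < s) :
    ∃ C : ℝ, 0 < C ∧ ∀ k l : ℝ,
      |k * |k| ^ (2 * s) - (k - l) * |k - l| ^ (2 * s) - l * |l| ^ (2 * s)| ≤
        C * (|k| ^ s * |k - l| ^ s * |l| + |k| ^ s * |k - l| * |l| ^ s +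
          |k| * |k - l| ^ s * |l| ^ s) := by
  simpa only [Real.norm_eq_abs, smul_eq_mul, mul_comm (_ ^ (2 * s))] using
    symbol_commutator_estimate_general ℝ hs.le
end

section
/- Let s ≥ 0 and let S:ℝ²→ℝ be the kernel S(k,ℓ) = Λ(k,ℓ)/|kℓ(k+ℓ)|^{1/2} if kℓ(k+ℓ) ≠ 0 and 0 otherwise, with Λ(k,ℓ) = 2|k+ℓ|·|k|·|ℓ|/(|k+ℓ|+|k|+|ℓ|) for (k,ℓ)≠(0,0) and Λ(0,0)=0. Let f:ℝ→ℂ be measurable with f(−k) = conj(f(k)) for almost every k, and assume that the function (k,ℓ) ↦ (|k|^{2s+1} + |k−ℓ|^{2s+1} + |ℓ|^{2s+1}) |S(k−ℓ,ℓ)| |f(k−ℓ)| |f(ℓ)| |f(−k)| is integrable on ℝ². Then ∬_{ℝ²} k|k|^{2s} S(k−ℓ,ℓ) f(k−ℓ) f(ℓ) f(−k) dℓ dk = −∬_{ℝ²} (k−ℓ)|k−ℓ|^{2s} S(k−ℓ,ℓ) f(k−ℓ) f(ℓ) f(−k) dℓ dk = −∬_{ℝ²} ℓ|ℓ|^{2s}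 S(k−ℓ,ℓ) f(k−ℓ) f(ℓ) f(−k) dℓ dk, and hence ∬_{ℝ²} k|k|^{2s} S(k−ℓ,ℓ) f(k−ℓ) f(ℓ) f(−k) dℓ dk = (1/3) ∬_{ℝ²} ( k|k|^{2s} − (k−ℓ)|k−ℓ|^{2s} − ℓ|ℓ|^{2s} ) S(k−ℓ,ℓ) f(k−ℓ) f(ℓ) f(−k) dℓ dk. -/
/-!
Put `x = k - l`, `y = l`, `z = -k`, so that `x + y + z = 0`. Symmetry and the Hamiltonian property
make `S(x, y)` invariant under all permutations of `(x, y, z)`, and so is `S(x, y) f(x) f(y) f(z)`.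
The transpositions `x ↔ z` and `y ↔ z` are measure-preserving involutions of the `(k, l)` plane
which turn an odd weight `w(k) = -w(z)` into `-w(x)` and `-w(y)`; adding the three equal integrals
gives the factor `1/3`.
-/

open MeasureTheory

open Function

/-- The kernels of quadratic Hamiltonian amplitude equations: `S` is symmetric and satisfies
`S(k + l, -l) = S(k, l)`. -/
structure IsHamiltonianKernel {G α : Type*} [AddGroup G] (S : G → G → α) : Prop where
  symm : ∀ k l, S k l = S l k
  add_neg : ∀ k l, S (k + l) (-l) = S k l

/-- The unweighted integrand `S(k - l, l) f(k - l) f(l) f(-k)` of the trilinear form, as a function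
of `p = (k, l)`; the energy estimate integrates it against weights in `k`, `k - l` and `l`. -/
def trilinearDensity {G R : Type*} [AddGroup G] [Mul R] (S : G → G → R) (f : G → R)
    (p : G × G) : R :=
  S (p.1 - p.2) p.2 * f (p.1 - p.2) * f p.2 * f (-p.1)

section Density

variable {G : Type*} [AddCommGroup G]

lemma IsHamiltonianKernel.neg_add_right {α : Type*} {S : G → G → α} (hS : IsHamiltonianKernel S)
    (k l : G) : S k (-(k + l)) = S k l := by
  calc S k (-(k + l)) = S (-l + (k + l)) (-(k + l)) := by rw [neg_add_cancel_comm_assoc]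
    _ = S (k + l) (-l) := by rw [hS.add_neg, hS.symm]
    _ = S k l := hS.add_neg k l

lemma IsHamiltonianKernel.comp {α β : Type*} {S : G → G → α} (hS : IsHamiltonianKernel S)
    (g : α → β) : IsHamiltonianKernel fun k l => g (S k l) where
  symm k l := congrArg g (hS.symm k l)
  add_neg k l := congrArg g (hS.add_neg k l)

variable {R : Type*} [CommSemigroup R] {S : G → G → R}

lemma trilinearDensity_neg_swap (hS : IsHamiltonianKernel S) (f : G → R) (k l : G) :
    trilinearDensity S f (-l, -k) = trilinearDensity S f (k, l) := by
  have hSkl : S (k - l) (-k) = S (k - l) l := by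
    simpa only [sub_add_cancel] using hS.neg_add_right (k - l) l
  simp only [trilinearDensity, neg_sub_neg, neg_neg, hSkl]
  ac_rfl

lemma trilinearDensity_sub_left (hS : IsHamiltonianKernel S) (f : G → R) (k l : G) :
    trilinearDensity S f (l - k, l) = trilinearDensity S f (k, l) := by
  have hSkl : S (-k) l = S (k - l) l := by
    rw [hS.symm (-k), hS.symm (k - l)]
    simpa only [add_sub_cancel] using hS.neg_add_right l (k - l)
  simp only [trilinearDensity, sub_sub_cancel_left, neg_sub, hSkl]
  ac_rfl

variable {A : Type*} [CommRing A] {T : G → G → A} {w : G → A}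

lemma odd_mul_trilinearDensity_neg_swap (hT : IsHamiltonianKernel T) (hw : w.Odd) (f : G → A)
    (p : G × G) :
    w (-p.2) * trilinearDensity T f (-p.2, -p.1) = -(w p.2 * trilinearDensity T f p) := by
  rw [trilinearDensity_neg_swap hT, hw, neg_mul]

lemma odd_mul_trilinearDensity_sub_left (hT : IsHamiltonianKernel T) (hw : w.Odd) (f : G → A)
    (p : G × G) :
    w (p.2 - p.1) * trilinearDensity T f (p.2 - p.1, p.2) =
      -(w (p.1 - p.2) * trilinearDensity T f p) := by
  rw [trilinearDensity_sub_left hT, ← neg_sub, hw, neg_mul]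

end Density

section Involutions

lemma integral_comp_of_involutive {α E : Type*} [MeasurableSpace α] {ν : Measure α}
    [NormedAddCommGroup E] [NormedSpace ℝ E] {φ : α → α} (hφ : MeasurePreserving φ ν ν)
    (hinv : Involutive φ) (g : α → E) : ∫ a, g (φ a) ∂ν = ∫ a, g a ∂ν :=
  hφ.integral_comp (MeasurableEquiv.ofInvolutive φ hinv hφ.measurable).measurableEmbedding g

variable {G : Type*} [MeasurableSpace G]

lemma measurePreserving_neg_swap [AddGroup G] [MeasurableNeg G] (μ : Measure G) [SFinite μ]
    [μ.IsNegInvariant] :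
    MeasurePreserving (fun p : G × G => (-p.2, -p.1)) (μ.prod μ) (μ.prod μ) :=
  ((Measure.measurePreserving_neg μ).prod (Measure.measurePreserving_neg μ)).comp
    Measure.measurePreserving_swap

lemma measurePreserving_sub_left_prod [AddGroup G] [MeasurableAdd₂ G] [MeasurableNeg G]
    (μ : Measure G) [SFinite μ] [μ.IsAddRightInvariant] [μ.IsNegInvariant] :
    MeasurePreserving (fun p : G × G => (p.2 - p.1, p.2)) (μ.prod μ) (μ.prod μ) := by
  simpa only [comp_def, Prod.map, neg_sub, id] using
    ((Measure.measurePreserving_neg μ).prod (.id μ)).comp (measurePreserving_sub_prod μ μ)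

end Involutions

section Integrals

variable {G 𝕜 : Type*} [AddCommGroup G] [MeasurableSpace G] [MeasurableNeg G] [RCLike 𝕜]
  {μ : Measure G} [SFinite μ] [μ.IsNegInvariant] {S : G → G → 𝕜} {w : G → 𝕜}

lemma integral_fst_mul_trilinearDensity_eq_neg_snd (hS : IsHamiltonianKernel S) (hw : w.Odd)
    (f : G → 𝕜) :
    ∫ p, w p.1 * trilinearDensity S f p ∂μ.prod μ =
      -∫ p, w p.2 * trilinearDensity S f p ∂μ.prod μ := by
  rw [← integral_neg,
    ← integral_comp_of_involutive (measurePreserving_neg_swap μ) fun p => by simp]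
  exact integral_congr_ae (.of_forall (odd_mul_trilinearDensity_neg_swap hS hw f))

variable [MeasurableAdd₂ G] [μ.IsAddRightInvariant]

lemma integral_fst_mul_trilinearDensity_eq_neg_sub (hS : IsHamiltonianKernel S) (hw : w.Odd)
    (f : G → 𝕜) :
    ∫ p, w p.1 * trilinearDensity S f p ∂μ.prod μ =
      -∫ p, w (p.1 - p.2) * trilinearDensity S f p ∂μ.prod μ := by
  rw [← integral_neg,
    ← integral_comp_of_involutive (measurePreserving_sub_left_prod μ) fun p => by simp]
  exact integral_congr_ae (.of_forall (odd_mul_trilinearDensity_sub_left hS hw f))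

lemma aestronglyMeasurable_trilinearDensity {f : G → 𝕜}
    (hS : AEStronglyMeasurable (uncurry S) (μ.prod μ)) (hf : AEStronglyMeasurable f μ) :
    AEStronglyMeasurable (trilinearDensity S f) (μ.prod μ) := by
  have hsub := (measurePreserving_sub_prod μ μ).quasiMeasurePreserving
  have hneg := (Measure.measurePreserving_neg μ).quasiMeasurePreserving
  have hfst : Measure.QuasiMeasurePreserving Prod.fst (μ.prod μ) μ :=
    Measure.quasiMeasurePreserving_fst
  exact (((hS.comp_quasiMeasurePreserving hsub).mul
    (hf.comp_quasiMeasurePreserving (hfst.comp hsub))).mul hf.comp_snd).mul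
      (hf.comp_quasiMeasurePreserving (hneg.comp hfst))

lemma integrable_fst_mul_trilinearDensity {f : G → 𝕜} {g : G × G → ℝ}
    (hS : AEStronglyMeasurable (uncurry S) (μ.prod μ)) (hf : AEStronglyMeasurable f μ)
    (hw : AEStronglyMeasurable w μ) (hwg : ∀ p : G × G, ‖w p.1‖ ≤ g p)
    (hint : Integrable (fun p => g p * ‖trilinearDensity S f p‖) (μ.prod μ)) :
    Integrable (fun p => w p.1 * trilinearDensity S f p) (μ.prod μ) := by
  refine hint.mono' (hw.comp_fst.mul (aestronglyMeasurable_trilinearDensity hS hf))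
    (.of_forall fun p => ?_)
  rw [norm_mul]
  gcongr
  exact hwg p

theorem trilinear_cyclic_symmetry_general (hS : IsHamiltonianKernel S) (hw : w.Odd) {f : G → 𝕜}
    (hint : Integrable (fun p => w p.1 * trilinearDensity S f p) (μ.prod μ)) :
    (∫ p, w p.1 * trilinearDensity S f p ∂μ.prod μ =
      -∫ p, w (p.1 - p.2) * trilinearDensity S f p ∂μ.prod μ) ∧
    (∫ p, w p.1 * trilinearDensity S f p ∂μ.prod μ =
      -∫ p, w p.2 * trilinearDensity S f p ∂μ.prod μ) ∧
    (∫ p, w p.1 * trilinearDensity S f p ∂μ.prod μ =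
      (1 / 3) * ∫ p, (w p.1 - w (p.1 - p.2) - w p.2) * trilinearDensity S f p ∂μ.prod μ) := by
  have hsub := integral_fst_mul_trilinearDensity_eq_neg_sub (μ := μ) hS hw f
  have hsnd := integral_fst_mul_trilinearDensity_eq_neg_snd (μ := μ) hS hw f
  have hint_sub :
      Integrable (fun p => w (p.1 - p.2) * trilinearDensity S f p) (μ.prod μ) :=
    ((measurePreserving_sub_left_prod μ).integrable_comp_of_integrable hint).neg.congr
      (.of_forall fun p => neg_eq_iff_eq_neg.mpr (odd_mul_trilinearDensity_sub_left hS hw f p))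
  have hint_snd : Integrable (fun p => w p.2 * trilinearDensity S f p) (μ.prod μ) :=
    ((measurePreserving_neg_swap μ).integrable_comp_of_integrable hint).neg.congr
      (.of_forall fun p => neg_eq_iff_eq_neg.mpr (odd_mul_trilinearDensity_neg_swap hS hw f p))
  refine ⟨hsub, hsnd, ?_⟩
  simp only [sub_mul]
  rw [integral_sub (by exact hint.sub hint_sub) hint_snd, integral_sub hint hint_sub]
  linear_combination (1 / 3 : 𝕜) * hsub + (1 / 3 : 𝕜) * hsnd

end Integrals

lemma Sker_eq_div (k l : ℝ) :
    Sker k l = 2 * |k + l| * |k| * |l| / (|k + l| + |k| + |l|) / √|k * l * (k + l)| := by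
  -- Where `Sker` and `Lam` branch to `0`, the quotients are `0` too because `x / 0 = 0`.
  unfold Sker Lam
  split_ifs with h0 h
  · simp_all
  · rfl
  · simp [not_not.mp h0]

lemma isHamiltonianKernel_Sker : IsHamiltonianKernel Sker where
  symm k l := by
    simp only [Sker_eq_div, add_comm l k, mul_comm l k]
    ring
  add_neg k l := by
    have hprod : |(k + l) * -l * k| = |k * l * (k + l)| := by
      rw [← abs_neg]
      ring_nf
    simp only [Sker_eq_div, add_neg_cancel_right, abs_neg, hprod]
    ring

lemma measurable_uncurry_Sker : Measurable (uncurry Sker) := by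
  simp only [uncurry_def, Sker_eq_div]
  fun_prop

lemma abs_mul_rpow_abs_le (x a : ℝ) : |x * |x| ^ a| ≤ |x| ^ (a + 1) := by
  simpa only [abs_mul, Real.abs_rpow_of_nonneg (abs_nonneg x), abs_abs, Real.rpow_one, mul_comm]
    using Real.le_rpow_add (abs_nonneg x) a 1

lemma odd_ofReal_mul_rpow_abs (a : ℝ) : Function.Odd fun x : ℝ => ((x * |x| ^ a : ℝ) : ℂ) :=
  fun x => by simp only [abs_neg, neg_mul, Complex.ofReal_neg]

lemma integrable_mul_rpow_abs_mul_trilinearDensity_Sker (a : ℝ) {f : ℝ → ℂ}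
    (hf : AEStronglyMeasurable f)
    (hint : Integrable (fun p : ℝ × ℝ =>
      (|p.1| ^ (a + 1) + |p.1 - p.2| ^ (a + 1) + |p.2| ^ (a + 1)) *
        |Sker (p.1 - p.2) p.2| * ‖f (p.1 - p.2)‖ * ‖f p.2‖ * ‖f (-p.1)‖)) :
    Integrable fun p : ℝ × ℝ =>
      ((p.1 * |p.1| ^ a : ℝ) : ℂ) * trilinearDensity (fun k l => (Sker k l : ℂ)) f p := by
  have hkernel : AEStronglyMeasurable (uncurry fun k l => (Sker k l : ℂ)) (volume.prod volume) :=
    (Complex.measurable_ofReal.comp measurable_uncurry_Sker).aestronglyMeasurable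
  have hweight : AEStronglyMeasurable fun k : ℝ => ((k * |k| ^ a : ℝ) : ℂ) := by fun_prop
  refine integrable_fst_mul_trilinearDensity hkernel hf hweight
    (g := fun p => |p.1| ^ (a + 1) + |p.1 - p.2| ^ (a + 1) + |p.2| ^ (a + 1)) (fun p => ?_) ?_
  · rw [Complex.norm_real, add_assoc]
    exact le_add_of_le_of_nonneg (abs_mul_rpow_abs_le p.1 a) (by positivity)
  · simpa only [trilinearDensity, norm_mul, Complex.norm_real, Real.norm_eq_abs, ← mul_assoc]
      using! hint

/-- Cyclic symmetry of the trilinear form in the `Hˢ` energy estimate. -/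
theorem trilinear_cyclic_symmetry (s : ℝ) (hs : 0 ≤ s) (f : ℝ → ℂ)
    (hmeas : Measurable f)
    (hreal : ∀ᵐ k : ℝ, f (-k) = (starRingEnd ℂ) (f k))
    (hint : Integrable (fun p : ℝ × ℝ =>
      (|p.1| ^ (2 * s + 1) + |p.1 - p.2| ^ (2 * s + 1) + |p.2| ^ (2 * s + 1)) *
        |Sker (p.1 - p.2) p.2| * ‖f (p.1 - p.2)‖ * ‖f p.2‖ * ‖f (-p.1)‖)) :
    ((∫ p : ℝ × ℝ, ((p.1 * |p.1| ^ (2 * s) : ℝ) : ℂ) * ((Sker (p.1 - p.2) p.2 : ℝ) : ℂ) *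
        f (p.1 - p.2) * f p.2 * f (-p.1))
      = -∫ p : ℝ × ℝ, (((p.1 - p.2) * |p.1 - p.2| ^ (2 * s) : ℝ) : ℂ) *
          ((Sker (p.1 - p.2) p.2 : ℝ) : ℂ) * f (p.1 - p.2) * f p.2 * f (-p.1)) ∧
    ((∫ p : ℝ × ℝ, ((p.1 * |p.1| ^ (2 * s) : ℝ) : ℂ) * ((Sker (p.1 - p.2) p.2 : ℝ) : ℂ) *
        f (p.1 - p.2) * f p.2 * f (-p.1))
      = -∫ p : ℝ × ℝ, ((p.2 * |p.2| ^ (2 * s) : ℝ) : ℂ) *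
          ((Sker (p.1 - p.2) p.2 : ℝ) : ℂ) * f (p.1 - p.2) * f p.2 * f (-p.1)) ∧
    ((∫ p : ℝ × ℝ, ((p.1 * |p.1| ^ (2 * s) : ℝ) : ℂ) * ((Sker (p.1 - p.2) p.2 : ℝ) : ℂ) *
        f (p.1 - p.2) * f p.2 * f (-p.1))
      = (1 / 3) * ∫ p : ℝ × ℝ,
          ((p.1 * |p.1| ^ (2 * s) - (p.1 - p.2) * |p.1 - p.2| ^ (2 * s) -
              p.2 * |p.2| ^ (2 * s) : ℝ) : ℂ) *
            ((Sker (p.1 - p.2) p.2 : ℝ) : ℂ) * f (p.1 - p.2) * f p.2 * f (-p.1)) := by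
  simpa only [trilinearDensity, Complex.ofReal_sub, ← mul_assoc] using!
    trilinear_cyclic_symmetry_general (isHamiltonianKernel_Sker.comp Complex.ofReal)
      (odd_ofReal_mul_rpow_abs (2 * s))
      (integrable_mul_rpow_abs_mul_trilinearDensity_Sker (2 * s) hmeas.aestronglyMeasurable hint)
end

section
/- Let S:ℝ²→ℝ be the kernel S(k,ℓ) = Λ(k,ℓ)/|kℓ(k+ℓ)|^{1/2} if kℓ(k+ℓ) ≠ 0 and 0 otherwise, with Λ(k,ℓ) = 2|k+ℓ|·|k|·|ℓ|/(|k+ℓ|+|k|+|ℓ|) for (k,ℓ)≠(0,0) and Λ(0,0)=0. Let f:ℝ→ℂ be measurable with f(−k) = conj(f(k)) for almost every k, and assume that (k,ℓ) ↦ (|k| + |k−ℓ| + |ℓ|) |S(k−ℓ,ℓ)| |f(k−ℓ)| |f(ℓ)| |f(−k)| is integrable on ℝ². Then ∬_{ℝ²} k · S(k−ℓ,ℓ) f(k−ℓ) f(ℓ) f(−k) dℓ dk = 0. -/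
open MeasureTheory

/-!
With `a = k - ℓ`, `b = ℓ`, `c = -k`, so that `a + b + c = 0`, the kernel is
`2 √|abc| / (|a| + |b| + |c|)` and the integrand is `-c` times a function symmetric in `a, b, c`.
Cyclic permutations of `(a, b, c)` preserve Lebesgue measure in `(k, ℓ)`, so three times the
integral is the integral of `-(a + b + c)` times that function.
-/

section BirkhoffSum

variable {α : Type*} {T : α → α}

theorem birkhoffSum_smul_of_comp_eq {R M : Type*} [Semiring R] [AddCommMonoid M] [Module R M]
    {h : α → M} (hh : ∀ x, h (T x) = h x) (φ : α → R) (n : ℕ) (x : α) :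
    birkhoffSum T (fun y ↦ φ y • h y) n x = birkhoffSum T φ n x • h x := by
  have h_iterate (i : ℕ) : h (T^[i] x) = h x :=
    congrFun (Function.iterate_invariant (funext hh) i) x
  simp only [birkhoffSum, h_iterate, Finset.sum_smul]

variable [MeasurableSpace α] {μ : Measure α} {E : Type*} [NormedAddCommGroup E] [NormedSpace ℝ E]

theorem integral_birkhoffSum (hT : MeasurePreserving T μ μ) {g : α → E} (hg : Integrable g μ)
    (n : ℕ) : ∫ x, birkhoffSum T g n x ∂μ = n • ∫ x, g x ∂μ := by
  have integral_iterate (i : ℕ) : ∫ x, g (T^[i] x) ∂μ = ∫ x, g x ∂μ := by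
    have hTi := hT.iterate i
    rw [← integral_map hTi.aemeasurable (hTi.map_eq.symm ▸ hg.aestronglyMeasurable), hTi.map_eq]
  have integrable_iterate (i : ℕ) : Integrable (fun x ↦ g (T^[i] x)) μ :=
    (hT.iterate i).integrable_comp_of_integrable hg
  simp only [birkhoffSum, integral_finsetSum _ fun i _ ↦ integrable_iterate i, integral_iterate,
    Finset.sum_const, Finset.card_range]

theorem integral_smul_eq_zero_of_birkhoffSum_eq_zero (hT : MeasurePreserving T μ μ) {n : ℕ}
    (hn : n ≠ 0) {φ : α → ℝ} (hφ : ∀ x, birkhoffSum T φ n x = 0) {h : α → E}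
    (hh : ∀ x, h (T x) = h x) (hint : Integrable (fun x ↦ φ x • h x) μ) :
    ∫ x, φ x • h x ∂μ = 0 := by
  have hsum := integral_birkhoffSum hT hint n
  simp only [birkhoffSum_smul_of_comp_eq hh, hφ, zero_smul, integral_zero] at hsum
  rw [← Nat.cast_smul_eq_nsmul ℝ] at hsum
  exact (smul_eq_zero_iff_right (Nat.cast_ne_zero.mpr hn)).mp hsum.symm

end BirkhoffSum

section TriadRotation

variable {G : Type*} [AddCommGroup G]

/-- The cyclic permutation `(a, b, c) ↦ (c, a, b)` of triads of wave numbers with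
`a + b + c = 0`, in the coordinates `(k, ℓ)` for which `(a, b, c) = (k - ℓ, ℓ, -k)`. -/
def triadRotation (p : G × G) : G × G := (-p.2, p.1 - p.2)

theorem birkhoffSum_triadRotation_fst (p : G × G) : birkhoffSum triadRotation Prod.fst 3 p = 0 := by
  calc birkhoffSum triadRotation Prod.fst 3 p
      = p.1 + -p.2 + -(p.1 - p.2) := by simp [birkhoffSum, Finset.sum_range_succ, triadRotation]
    _ = 0 := by abel

theorem measurePreserving_triadRotation [MeasurableSpace G] [MeasurableAdd₂ G] [MeasurableNeg G]
    (μ : Measure G) [SFinite μ] [μ.IsAddRightInvariant] [μ.IsNegInvariant] :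
    MeasurePreserving triadRotation (μ.prod μ) (μ.prod μ) :=
  ((Measure.measurePreserving_neg μ).prod (MeasurePreserving.id μ)).comp
    (measurePreserving_prod_sub_swap μ μ)

end TriadRotation

section Kernel

theorem sker_eq_two_mul_sqrt_div (k l : ℝ) :
    Sker k l = 2 * √|k * l * (k + l)| / (|k| + |l| + |k + l|) := by
  by_cases h : k * l * (k + l) = 0
  · simp [Sker, h]
  have hkl : (k, l) ≠ (0, 0) := by
    rintro ⟨⟩
    simp at h
  calc Sker k l
      = 2 * (|k * l * (k + l)| / √|k * l * (k + l)|) / (|k| + |l| + |k + l|) := by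
        simp only [Sker, Lam, if_pos h, if_neg hkl, abs_mul]
        ring
    _ = _ := by rw [Real.div_sqrt]

theorem sker_neg_add_left (k l : ℝ) : Sker (-(k + l)) k = Sker k l := by
  have hsum : -(k + l) + k = -l := by ring
  simp only [sker_eq_two_mul_sqrt_div, hsum, abs_mul, abs_neg]
  ring_nf

theorem measurable_sker : Measurable fun p : ℝ × ℝ ↦ Sker p.1 p.2 := by
  simp only [sker_eq_two_mul_sqrt_div]
  fun_prop

end Kernel

section TriadInteraction

variable {A : Type*} [NormedCommRing A] [NormedAlgebra ℝ A] {f : ℝ → A}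

/-- The integrand of the trilinear form without its factor `k`, namely
`S(a, b) f(a) f(b) f(c)` on the triad `(a, b, c) = (k - ℓ, ℓ, -k)`. -/
noncomputable def triadInteraction (f : ℝ → A) (p : ℝ × ℝ) : A :=
  Sker (p.1 - p.2) p.2 • (f (p.1 - p.2) * f p.2 * f (-p.1))

theorem triadInteraction_triadRotation (f : ℝ → A) (p : ℝ × ℝ) :
    triadInteraction f (triadRotation p) = triadInteraction f p := by
  obtain ⟨k, l⟩ := p
  have hfirst : -l - (k - l) = -k := by ring
  have hSker : Sker (-k) (k - l) = Sker (k - l) l := by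
    simpa only [sub_add_cancel] using sker_neg_add_left (k - l) l
  simp only [triadInteraction, triadRotation, hfirst, hSker, neg_neg]
  ring_nf

theorem stronglyMeasurable_triadInteraction (hf : StronglyMeasurable f) :
    StronglyMeasurable (triadInteraction f) := by
  have hSker : Measurable fun p : ℝ × ℝ ↦ Sker (p.1 - p.2) p.2 :=
    measurable_sker.comp ((measurable_fst.sub measurable_snd).prodMk measurable_snd)
  exact hSker.stronglyMeasurable.smul <|
    ((hf.comp_measurable (by fun_prop)).mul (hf.comp_measurable (by fun_prop))).mul
      (hf.comp_measurable (by fun_prop))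

theorem norm_triadInteraction_le (f : ℝ → A) (p : ℝ × ℝ) :
    ‖triadInteraction f p‖ ≤
      |Sker (p.1 - p.2) p.2| * ‖f (p.1 - p.2)‖ * ‖f p.2‖ * ‖f (-p.1)‖ := by
  calc ‖triadInteraction f p‖
      = |Sker (p.1 - p.2) p.2| * ‖f (p.1 - p.2) * f p.2 * f (-p.1)‖ := by
        rw [triadInteraction, norm_smul, Real.norm_eq_abs]
    _ ≤ |Sker (p.1 - p.2) p.2| * (‖f (p.1 - p.2)‖ * ‖f p.2‖ * ‖f (-p.1)‖) := by
        gcongr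
        exact norm_mul₃_le
    _ = _ := by ring

theorem integrable_fst_smul_triadInteraction (hf : StronglyMeasurable f)
    (hint : Integrable fun p : ℝ × ℝ ↦ (|p.1| + |p.1 - p.2| + |p.2|) *
      |Sker (p.1 - p.2) p.2| * ‖f (p.1 - p.2)‖ * ‖f p.2‖ * ‖f (-p.1)‖) :
    Integrable fun p : ℝ × ℝ ↦ p.1 • triadInteraction f p := by
  refine hint.mono' (measurable_fst.stronglyMeasurable.smul
    (stronglyMeasurable_triadInteraction hf)).aestronglyMeasurable (.of_forall fun p ↦ ?_)
  have hweight : |p.1| ≤ |p.1| + |p.1 - p.2| + |p.2| := by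
    linarith [abs_nonneg (p.1 - p.2), abs_nonneg p.2]
  calc ‖p.1 • triadInteraction f p‖
      = |p.1| * ‖triadInteraction f p‖ := by rw [norm_smul, Real.norm_eq_abs]
    _ ≤ (|p.1| + |p.1 - p.2| + |p.2|) *
        (|Sker (p.1 - p.2) p.2| * ‖f (p.1 - p.2)‖ * ‖f p.2‖ * ‖f (-p.1)‖) := by
      gcongr
      exact norm_triadInteraction_le f p
    _ = _ := by ring

theorem trilinear_vanishes_s_zero_general [CompleteSpace A] (f : ℝ → A)
    (hint : Integrable fun p : ℝ × ℝ ↦ p.1 • triadInteraction f p) :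
    ∫ p : ℝ × ℝ, p.1 • triadInteraction f p = 0 :=
  integral_smul_eq_zero_of_birkhoffSum_eq_zero (measurePreserving_triadRotation volume)
    three_ne_zero birkhoffSum_triadRotation_fst (triadInteraction_triadRotation f) hint

end TriadInteraction

/-- Vanishing of the trilinear form at Sobolev index `s = 0`: the mechanism behind
conservation of the `L²` norm. -/
theorem trilinear_vanishes_s_zero (f : ℝ → ℂ)
    (hmeas : Measurable f)
    (hreal : ∀ᵐ k : ℝ, f (-k) = (starRingEnd ℂ) (f k))
    (hint : Integrable (fun p : ℝ × ℝ =>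
      (|p.1| + |p.1 - p.2| + |p.2|) *
        |Sker (p.1 - p.2) p.2| * ‖f (p.1 - p.2)‖ * ‖f p.2‖ * ‖f (-p.1)‖)) :
    ∫ p : ℝ × ℝ, ((p.1 : ℝ) : ℂ) * ((Sker (p.1 - p.2) p.2 : ℝ) : ℂ) *
        f (p.1 - p.2) * f p.2 * f (-p.1) = 0 := by
  simpa only [triadInteraction, Complex.real_smul, mul_assoc] using
    trilinear_vanishes_s_zero_general f
      (integrable_fst_smul_triadInteraction hmeas.stronglyMeasurable hint)
end

section
/- For all real s > 0 and s' > 2 there exists a constant C > 0 with the following property. Let S be the kernel S(k,ℓ) = Λ(k,ℓ)/|kℓ(k+ℓ)|^{1/2} if kℓ(k+ℓ) ≠ 0 and 0 otherwise, with Λ(k,ℓ) = 2|k+ℓ|·|k|·|ℓ|/(|k+ℓ|+|k|+|ℓ|) for (k,ℓ)≠(0,0) and Λ(0,0)=0. For every measurable f:ℝ→ℂ with f(−k) = conj(f(k)) almost everywhere, with ‖f‖₀, ‖f‖_s, ‖f‖_{s'} all finite (where ‖f‖_r := (∫_ℝ |k|^{2r}|f(k)|² dk)^{1/2}), and such that (k,ℓ)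 ↦ (|k|^{2s+1}+|k−ℓ|^{2s+1}+|ℓ|^{2s+1})|S(k−ℓ,ℓ)||f(k−ℓ)||f(ℓ)||f(−k)| is integrable on ℝ², one has | ∬_{ℝ²} k|k|^{2s} S(k−ℓ,ℓ) f(k−ℓ) f(ℓ) f(−k) dℓ dk | ≤ C · ‖f‖₀^{1−2/s'} · ‖f‖_{s'}^{2/s'} · ‖f‖_s². -/
open MeasureTheory

/-!
Write `a = k - l`, `b = l`, `c = -k`, so that `a + b + c = 0` and the form integrates
`-φ(c) S(a, b) f(a) f(b) f(c)` with `φ(x) = x |x| ^ (2 s)`. The rotation `(a, b, c) ↦ (c, a, b)`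
preserves Lebesgue measure, `S` and the product of the values of `f`, so `φ(c)` may be replaced by
the mean of `φ(a)`, `φ(b)`, `φ(c)`. If `b` is the smallest of the three frequencies, then `a` and
`c` nearly cancel: since `φ` is odd and locally Lipschitz,
`|φ(a) + φ(b) + φ(c)| ≲ |b| |a| ^ s |c| ^ s`, while `S(a, b) ≤ |b| ^ (1/2)` by the AM-GM
inequality. Hence the form is at most a multiple of `∫ |b| ^ (3/2) |f(b)| db · ‖f‖_s ^ 2`.
Carlson's inequality bounds the first factor by `‖f‖_0 ^ (1 - 2/s') ‖f‖_{s'} ^ (2/s')`; the tail of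
the integral is what requires `s' > 2`.
-/

section OddPower

/-- The odd extension `x |x| ^ p` of the power `x ^ (p + 1)`. The multiplier `k |k| ^ (2 s)` of the
trilinear form is `oddRpow (2 * s) k`. -/
noncomputable def oddRpow (p x : ℝ) : ℝ := x * |x| ^ p

lemma oddRpow_neg (p x : ℝ) : oddRpow p (-x) = -oddRpow p x := by
  simp only [oddRpow, abs_neg, neg_mul]

lemma measurable_oddRpow (p : ℝ) : Measurable (oddRpow p) := by
  unfold oddRpow
  fun_prop

lemma abs_oddRpow {p : ℝ} (hp : p + 1 ≠ 0) (x : ℝ) : |oddRpow p x| = |x| ^ (p + 1) := by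
  rw [oddRpow, abs_mul, Real.abs_rpow_of_nonneg (abs_nonneg x), abs_abs,
    Real.rpow_add_one' (abs_nonneg x) hp, mul_comm]

lemma hasDerivAt_oddRpow {p : ℝ} (hp : 0 ≤ p) (x : ℝ) :
    HasDerivAt (oddRpow p) ((p + 1) * |x| ^ p) x := by
  rcases eq_or_ne x 0 with rfl | hx
  · have hcont : Filter.Tendsto (fun t : ℝ ↦ |t| ^ p) (nhds 0) (nhds (|0| ^ p)) :=
      ((Real.continuousAt_rpow_const _ _ (Or.inr hp)).comp continuous_abs.continuousAt).tendsto
    have hvalue : (p + 1) * |(0 : ℝ)| ^ p = |0| ^ p := by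
      rcases hp.eq_or_lt with rfl | hp
      · simp
      · simp [Real.zero_rpow hp.ne']
    rw [hvalue, hasDerivAt_iff_tendsto_slope]
    refine (hcont.mono_left nhdsWithin_le_nhds).congr' ?_
    filter_upwards [self_mem_nhdsWithin] with t ht
    rw [slope_def_field, oddRpow, oddRpow]
    field_simp [show t ≠ 0 from ht]
    simp
  · have hpow := (hasDerivAt_abs hx).rpow_const (p := p) (Or.inl (abs_ne_zero.2 hx))
    convert! (hasDerivAt_id x).mul hpow using 1
    have hsign : x * (SignType.sign x : ℝ) = |x| := self_mul_sign x
    rw [Real.rpow_sub_one (abs_ne_zero.2 hx)]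
    have : |x| ≠ 0 := abs_ne_zero.2 hx
    simp only [id]
    field_simp
    linear_combination (-p) * hsign

lemma abs_oddRpow_sub_le {p x y M : ℝ} (hp : 0 ≤ p) (hx : |x| ≤ M) (hy : |y| ≤ M) :
    |oddRpow p x - oddRpow p y| ≤ (p + 1) * M ^ p * |x - y| := by
  refine (convex_Icc (-M) M).norm_image_sub_le_of_norm_hasDerivWithin_le
    (fun z _ ↦ (hasDerivAt_oddRpow hp z).hasDerivWithinAt) (fun z hz ↦ ?_)
    (abs_le.1 hy) (abs_le.1 hx)
  rw [Real.norm_of_nonneg (by positivity)]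
  have : |z| ≤ M := abs_le.2 hz
  gcongr

end OddPower

section Kernel

lemma Sker_eq (a b : ℝ) :
    Sker a b = 2 * √|a * b * (a + b)| / (|a + b| + |a| + |b|) := by
  by_cases h : a * b * (a + b) = 0
  · simp [Sker, h]
  have ha : a ≠ 0 := by rintro rfl; simp at h
  have hsqrt : √|a * b * (a + b)| ^ 2 = |a + b| * |a| * |b| := by
    rw [Real.sq_sqrt (abs_nonneg _), abs_mul, abs_mul]; ring
  have hpos : √|a * b * (a + b)| ≠ 0 := (Real.sqrt_pos.2 (abs_pos.2 h)).ne'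
  have hLam : Lam a b = 2 * √|a * b * (a + b)| ^ 2 / (|a + b| + |a| + |b|) := by
    rw [Lam, if_neg (by simp [ha]), hsqrt]; ring
  rw [Sker, if_pos h, hLam]
  field_simp

lemma measurable_Sker : Measurable (fun p : ℝ × ℝ ↦ Sker p.1 p.2) := by
  simp_rw [Sker_eq]
  fun_prop

lemma Sker_nonneg (a b : ℝ) : 0 ≤ Sker a b := by
  rw [Sker_eq]; positivity

lemma Sker_rotate {a b c : ℝ} (h : a + b + c = 0) : Sker b c = Sker a b := by
  obtain rfl : c = -(a + b) := by linarith
  have hsum : b + -(a + b) = -a := by ring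
  have hprod : b * -(a + b) * -a = a * b * (a + b) := by ring
  rw [Sker_eq, Sker_eq, hsum, hprod, abs_neg, abs_neg]
  congr 1; ring

lemma Sker_le_sqrt_abs (a b : ℝ) : Sker a b ≤ √|b| := by
  have hamgm : 2 * (√|a| * √|a + b|) ≤ |a| + |a + b| := by
    have h := two_mul_le_add_sq √|a| √|a + b|
    rwa [Real.sq_sqrt (abs_nonneg _), Real.sq_sqrt (abs_nonneg _), mul_assoc] at h
  rw [Sker_eq]
  refine div_le_of_le_mul₀ (by positivity) (by positivity) ?_
  calc 2 * √|a * b * (a + b)| = √|b| * (2 * (√|a| * √|a + b|)) := by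
        rw [abs_mul, abs_mul, Real.sqrt_mul (by positivity), Real.sqrt_mul (by positivity)]; ring
    _ ≤ √|b| * (|a + b| + |a| + |b|) := by
        gcongr
        linarith [abs_nonneg b]

end Kernel

section Triad

/-- The constant in the pointwise bound of the symmetrised kernel on resonant triads. -/
noncomputable def triadConst (s : ℝ) : ℝ := (2 * s + 1) * 2 ^ s + 1

lemma triadConst_pos {s : ℝ} (hs : 0 ≤ s) : 0 < triadConst s := by
  unfold triadConst; positivity

lemma abs_le_sqrt_of_add_eq_zero {a b c : ℝ} (h : a + b + c = 0) (hbc : |b| ≤ |c|) :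
    |a| ≤ √(2 * (|a| * |c|)) := by
  have hac : |a| ≤ 2 * |c| := by
    rw [show a = -(b + c) by linarith, abs_neg]
    linarith [abs_add_le b c]
  refine Real.le_sqrt_of_sq_le ?_
  nlinarith [abs_nonneg a]

/-- The two large frequencies nearly cancel: `a ≈ -c`, so `oddRpow` being odd and Lipschitz gains a
factor of the small frequency `b`. -/
lemma abs_sum_oddRpow_le {s a b c : ℝ} (hs : 0 ≤ s) (h : a + b + c = 0) (hba : |b| ≤ |a|)
    (hbc : |b| ≤ |c|) :
    |oddRpow (2 * s) a + oddRpow (2 * s) b + oddRpow (2 * s) c| ≤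
      triadConst s * (|b| * (|a| ^ s * |c| ^ s)) := by
  set M := √(2 * (|a| * |c|))
  have haM : |a| ≤ M := abs_le_sqrt_of_add_eq_zero h hbc
  have hcM : |-c| ≤ M := by
    rw [abs_neg]
    simpa only [M, mul_comm |a|] using
      abs_le_sqrt_of_add_eq_zero (a := c) (b := b) (by linarith) hba
  have hMpow : M ^ (2 * s) = 2 ^ s * (|a| ^ s * |c| ^ s) := by
    rw [Real.rpow_mul (by positivity), Real.rpow_two, Real.sq_sqrt (by positivity),
      Real.mul_rpow (by positivity) (by positivity), Real.mul_rpow (by positivity) (by positivity)]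
  have hlarge : |oddRpow (2 * s) a + oddRpow (2 * s) c| ≤
      (2 * s + 1) * (2 ^ s * (|a| ^ s * |c| ^ s)) * |b| := by
    have hlip := abs_oddRpow_sub_le (p := 2 * s) (by positivity) haM hcM
    rwa [oddRpow_neg, sub_neg_eq_add, sub_neg_eq_add, hMpow, show a + c = -b by linarith,
      abs_neg] at hlip
  have hsmall : |oddRpow (2 * s) b| ≤ |b| * (|a| ^ s * |c| ^ s) := by
    rw [abs_oddRpow (by positivity), Real.rpow_add_one' (by positivity) (by positivity), mul_comm,
      two_mul, Real.rpow_add_of_nonneg (by positivity) hs hs]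
    gcongr
  calc |oddRpow (2 * s) a + oddRpow (2 * s) b + oddRpow (2 * s) c|
      = |(oddRpow (2 * s) a + oddRpow (2 * s) c) + oddRpow (2 * s) b| := by congr 1; ring
    _ ≤ |oddRpow (2 * s) a + oddRpow (2 * s) c| + |oddRpow (2 * s) b| := abs_add_le _ _
    _ ≤ triadConst s * (|b| * (|a| ^ s * |c| ^ s)) := by
        rw [triadConst]
        linarith

lemma abs_sum_oddRpow_mul_Sker_le_of_min {s a b c : ℝ} (hs : 0 ≤ s) (h : a + b + c = 0)
    (hba : |b| ≤ |a|) (hbc : |b| ≤ |c|) :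
    |oddRpow (2 * s) a + oddRpow (2 * s) b + oddRpow (2 * s) c| * Sker a b ≤
      triadConst s * (|b| ^ (3 / 2 : ℝ) * (|a| ^ s * |c| ^ s)) := by
  have hK := triadConst_pos hs
  have hpow : |b| ^ (3 / 2 : ℝ) = |b| * √|b| := by
    rw [show (3 / 2 : ℝ) = 1 + 1 / 2 by norm_num,
      Real.rpow_add_of_nonneg (abs_nonneg b) (by norm_num) (by norm_num), Real.rpow_one,
      ← Real.sqrt_eq_rpow]
  calc _ ≤ triadConst s * (|b| * (|a| ^ s * |c| ^ s)) * √|b| :=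
        mul_le_mul (abs_sum_oddRpow_le hs h hba hbc) (Sker_le_sqrt_abs a b) (Sker_nonneg a b)
          (by positivity)
    _ = _ := by rw [hpow]; ring

lemma abs_sum_oddRpow_mul_Sker_le {s a b c : ℝ} (hs : 0 ≤ s) (h : a + b + c = 0) :
    |oddRpow (2 * s) a + oddRpow (2 * s) b + oddRpow (2 * s) c| * Sker a b ≤
      triadConst s * (|a| ^ (3 / 2 : ℝ) * (|b| ^ s * |c| ^ s) +
        |b| ^ (3 / 2 : ℝ) * (|c| ^ s * |a| ^ s) + |c| ^ (3 / 2 : ℝ) * (|a| ^ s * |b| ^ s)) := by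
  have of_min {a b c : ℝ} (h : a + b + c = 0) (hba : |b| ≤ |a|) (hbc : |b| ≤ |c|) :
      |oddRpow (2 * s) a + oddRpow (2 * s) b + oddRpow (2 * s) c| * Sker a b ≤
        triadConst s * (|a| ^ (3 / 2 : ℝ) * (|b| ^ s * |c| ^ s) +
          |b| ^ (3 / 2 : ℝ) * (|c| ^ s * |a| ^ s) + |c| ^ (3 / 2 : ℝ) * (|a| ^ s * |b| ^ s)) := by
    refine (abs_sum_oddRpow_mul_Sker_le_of_min hs h hba hbc).trans ?_
    have hK := triadConst_pos hs
    have ha : 0 ≤ |a| ^ (3 / 2 : ℝ) * (|b| ^ s * |c| ^ s) := by positivity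
    have hc : 0 ≤ |c| ^ (3 / 2 : ℝ) * (|a| ^ s * |b| ^ s) := by positivity
    gcongr
    linarith
  by_cases hb : |b| ≤ |a| ∧ |b| ≤ |c|
  · exact of_min h hb.1 hb.2
  by_cases hc : |c| ≤ |b| ∧ |c| ≤ |a|
  · have hmin := of_min (a := b) (by linarith) hc.1 hc.2
    rw [Sker_rotate h, ← add_rotate (oddRpow _ a)] at hmin
    linarith
  · have hcab : c + a + b = 0 := by linarith
    have ha : |a| ≤ |c| ∧ |a| ≤ |b| := by grind
    have hmin := of_min hcab ha.1 ha.2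
    rw [← Sker_rotate hcab, add_rotate (oddRpow _ c)] at hmin
    linarith

end Triad

section Carlson

open Module

variable {V E : Type*} [NormedAddCommGroup V] [NormedAddCommGroup E]

/-- The density of the homogeneous Sobolev norm of order `r` on the Fourier side. -/
noncomputable def sobolevDensity (r : ℝ) (f : V → E) (k : V) : ℝ := ‖k‖ ^ (2 * r) * ‖f k‖ ^ 2

lemma sobolevDensity_zero (f : V → E) : sobolevDensity 0 f = fun k ↦ ‖f k‖ ^ 2 := by
  ext k
  simp [sobolevDensity]

lemma sobolevDensity_eq_sq (r : ℝ) (f : V → E) (k : V) :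
    sobolevDensity r f k = (‖k‖ ^ r * ‖f k‖) ^ 2 := by
  rw [sobolevDensity, mul_pow, mul_comm 2 r, Real.rpow_mul (norm_nonneg k), Real.rpow_two]

lemma sobolevDensity_nonneg (r : ℝ) (f : V → E) (k : V) : 0 ≤ sobolevDensity r f k := by
  rw [sobolevDensity_eq_sq]
  positivity

section Pointwise

variable [NormedSpace ℝ V]

lemma norm_rpow_div_one_add_norm_inv_smul_rpow {R : ℝ} (hR : 0 < R) (a b : ℝ) (x : V) :
    ‖x‖ ^ a / (1 + ‖R⁻¹ • x‖ ^ b) = R ^ a * (‖R⁻¹ • x‖ ^ a / (1 + ‖R⁻¹ • x‖ ^ b)) := by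
  have hx : ‖x‖ = R * ‖R⁻¹ • x‖ := by
    rw [norm_smul, norm_inv, Real.norm_of_nonneg hR.le, mul_inv_cancel_left₀ hR.ne']
  nth_rw 1 [hx]
  rw [Real.mul_rpow hR.le (norm_nonneg _), mul_div_assoc]

lemma norm_rpow_mul_norm_le {q r R t : ℝ} (hR : 0 < R) (ht : 0 < t) (f : V → E) (k : V) :
    ‖k‖ ^ q * ‖f k‖ ≤ (t * (‖k‖ ^ (2 * q) / (1 + ‖R⁻¹ • k‖ ^ (2 * r))) +
      t⁻¹ * (sobolevDensity 0 f k + (R ^ (2 * r))⁻¹ * sobolevDensity r f k)) / 2 := by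
  set D : ℝ := 1 + ‖R⁻¹ • k‖ ^ (2 * r) with hD
  have hDpos : 0 < D := by positivity
  have henergy : sobolevDensity 0 f k + (R ^ (2 * r))⁻¹ * sobolevDensity r f k = D * ‖f k‖ ^ 2 := by
    rw [hD, norm_smul, norm_inv, Real.norm_of_nonneg hR.le,
      Real.mul_rpow (by positivity) (norm_nonneg k), Real.inv_rpow hR.le, sobolevDensity_zero,
      sobolevDensity]
    ring
  have hroot : ‖k‖ ^ (2 * q) = (‖k‖ ^ q) ^ 2 := by
    rw [mul_comm, Real.rpow_mul (norm_nonneg k), Real.rpow_two]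
  have hsq : 0 ≤ (t * ‖k‖ ^ q - D * ‖f k‖) ^ 2 / (t * D) := by positivity
  rw [henergy, hroot]
  have hexpand : (t * ‖k‖ ^ q - D * ‖f k‖) ^ 2 / (t * D) =
      t * ((‖k‖ ^ q) ^ 2 / D) + t⁻¹ * (D * ‖f k‖ ^ 2) - 2 * (‖k‖ ^ q * ‖f k‖) := by
    field_simp
    ring
  linarith

end Pointwise

variable [MeasurableSpace V]

/-- The homogeneous Sobolev norm `‖f‖_r` on the Fourier side; it has the junk value `0` when
`sobolevDensity r f` is not integrable. -/
noncomputable def sobolevNorm (r : ℝ) (f : V → E) (μ : Measure V) : ℝ :=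
  √(∫ k, sobolevDensity r f k ∂μ)

lemma sobolevNorm_nonneg (r : ℝ) (f : V → E) (μ : Measure V) : 0 ≤ sobolevNorm r f μ :=
  Real.sqrt_nonneg _

lemma sobolevNorm_sq (r : ℝ) (f : V → E) (μ : Measure V) :
    sobolevNorm r f μ ^ 2 = ∫ k, sobolevDensity r f k ∂μ :=
  Real.sq_sqrt (integral_nonneg (sobolevDensity_nonneg r f))

lemma ae_eq_zero_of_sobolevNorm_eq_zero {μ : Measure V} [NullSingletonClass μ] {r : ℝ} {f : V → E}
    (hf : Integrable (sobolevDensity r f) μ) (h : sobolevNorm r f μ = 0) : f =ᵐ[μ] 0 := by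
  have hzero : ∫ k, sobolevDensity r f k ∂μ = 0 := by rw [← sobolevNorm_sq, h, sq, zero_mul]
  rw [integral_eq_zero_iff_of_nonneg (sobolevDensity_nonneg r f) hf] at hzero
  filter_upwards [hzero, μ.ae_ne 0] with k hk hk0
  have hpos : 0 < ‖k‖ ^ (2 * r) := Real.rpow_pos_of_pos (norm_pos_iff.2 hk0) _
  simpa [sobolevDensity, hpos.ne'] using hk

lemma integrableOn_Ioi_rpow_div_one_add_rpow {a b : ℝ} (ha : -1 < a) (hab : a + 1 < b) :
    IntegrableOn (fun y : ℝ ↦ y ^ a / (1 + y ^ b)) (Set.Ioi 0) := by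
  rw [← Set.Ioc_union_Ioi_eq_Ioi zero_le_one]
  refine IntegrableOn.union ?_ ?_
  · have hpow : IntegrableOn (fun y : ℝ ↦ y ^ a) (Set.Ioc 0 1) :=
      (intervalIntegral.intervalIntegrable_rpow' ha).1
    refine hpow.mono' (Measurable.div (by fun_prop) (by fun_prop)).aestronglyMeasurable ?_
    filter_upwards [ae_restrict_mem measurableSet_Ioc] with y hy
    have hy0 : 0 ≤ y := hy.1.le
    rw [Real.norm_of_nonneg (by positivity)]
    exact div_le_self (by positivity) (le_add_of_nonneg_right (by positivity))
  · have hpow : IntegrableOn (fun y : ℝ ↦ y ^ (a - b)) (Set.Ioi 1) :=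
      integrableOn_Ioi_rpow_of_lt (by linarith) one_pos
    refine hpow.mono' (Measurable.div (by fun_prop) (by fun_prop)).aestronglyMeasurable ?_
    filter_upwards [ae_restrict_mem measurableSet_Ioi] with y hy
    have hy0 : 0 < y := one_pos.trans hy
    rw [Real.norm_of_nonneg (by positivity), Real.rpow_sub hy0]
    gcongr
    linarith

variable [NormedSpace ℝ V] [FiniteDimensional ℝ V] [BorelSpace V]
  {μ : Measure V} [μ.IsAddHaarMeasure]

lemma integrable_norm_rpow_div_one_add_norm_rpow [Nontrivial V] {a b : ℝ}
    (ha : -finrank ℝ V < a) (hab : a + finrank ℝ V < b) :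
    Integrable (fun x : V ↦ ‖x‖ ^ a / (1 + ‖x‖ ^ b)) μ := by
  rw [integrable_fun_norm_addHaar μ (f := fun y ↦ y ^ a / (1 + y ^ b))]
  have hdim : ((finrank ℝ V - 1 : ℕ) : ℝ) = finrank ℝ V - 1 := by
    rw [Nat.cast_pred finrank_pos]
  refine (integrableOn_Ioi_rpow_div_one_add_rpow (a := finrank ℝ V - 1 + a) (b := b)
    (by linarith) (by linarith)).congr_fun (fun y (hy : 0 < y) ↦ ?_) measurableSet_Ioi
  simp only [smul_eq_mul]
  rw [Real.rpow_add hy, ← hdim, Real.rpow_natCast, mul_div_assoc]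

lemma integral_norm_rpow_div_one_add_norm_inv_smul_rpow {R : ℝ} (hR : 0 < R) (a b : ℝ) :
    ∫ x : V, ‖x‖ ^ a / (1 + ‖R⁻¹ • x‖ ^ b) ∂μ =
      R ^ (a + finrank ℝ V) * ∫ x : V, ‖x‖ ^ a / (1 + ‖x‖ ^ b) ∂μ := by
  simp_rw [norm_rpow_div_one_add_norm_inv_smul_rpow hR]
  rw [integral_const_mul,
    Measure.integral_comp_inv_smul_of_nonneg μ (fun x : V ↦ ‖x‖ ^ a / (1 + ‖x‖ ^ b)) hR.le,
    smul_eq_mul, Real.rpow_add hR, Real.rpow_natCast, mul_assoc]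

lemma integrable_norm_rpow_mul_norm_and_integral_le [Nontrivial V] {q r R t : ℝ} {f : V → E}
    (hq : -finrank ℝ V < 2 * q) (hqr : 2 * q + finrank ℝ V < 2 * r) (hR : 0 < R) (ht : 0 < t)
    (hf : AEStronglyMeasurable f μ) (hf0 : Integrable (sobolevDensity 0 f) μ)
    (hfr : Integrable (sobolevDensity r f) μ) :
    Integrable (fun k ↦ ‖k‖ ^ q * ‖f k‖) μ ∧
    ∫ k, ‖k‖ ^ q * ‖f k‖ ∂μ ≤
      (t * (R ^ (2 * q + finrank ℝ V) * ∫ x : V, ‖x‖ ^ (2 * q) / (1 + ‖x‖ ^ (2 * r)) ∂μ) +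
        t⁻¹ * (sobolevNorm 0 f μ ^ 2 + (R ^ (2 * r))⁻¹ * sobolevNorm r f μ ^ 2)) / 2 := by
  have hamgm := norm_rpow_mul_norm_le (q := q) (r := r) hR ht f
  have hweight : Integrable (fun x : V ↦ ‖x‖ ^ (2 * q) / (1 + ‖R⁻¹ • x‖ ^ (2 * r))) μ := by
    simp_rw [norm_rpow_div_one_add_norm_inv_smul_rpow hR]
    exact ((integrable_norm_rpow_div_one_add_norm_rpow hq hqr).comp_smul
      (inv_ne_zero hR.ne')).const_mul _
  have henergy : Integrable (fun k ↦ sobolevDensity 0 f k +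
      (R ^ (2 * r))⁻¹ * sobolevDensity r f k) μ := hf0.add (hfr.const_mul _)
  have hmajorant := ((hweight.const_mul t).add (henergy.const_mul t⁻¹)).div_const 2
  have hint : Integrable (fun k ↦ ‖k‖ ^ q * ‖f k‖) μ := by
    refine hmajorant.mono' ?_ (.of_forall fun k ↦ ?_)
    · exact (by fun_prop : Measurable fun k : V ↦ ‖k‖ ^ q).aestronglyMeasurable.mul hf.norm
    · rw [Real.norm_of_nonneg (by positivity)]
      exact hamgm k
  refine ⟨hint, (integral_mono hint hmajorant hamgm).trans_eq ?_⟩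
  rw [integral_div, integral_add' (hweight.const_mul t) (henergy.const_mul t⁻¹), integral_const_mul,
    integral_const_mul, integral_norm_rpow_div_one_add_norm_inv_smul_rpow hR,
    integral_add hf0 (hfr.const_mul _), integral_const_mul, sobolevNorm_sq, sobolevNorm_sq]

/-- The choice of `R` balances the two energies and that of `t` optimises the AM-GM inequality. -/
lemma exists_scaling_eq_interpolation {A B : ℝ} (hA : 0 < A) (hB : 0 < B) {r : ℝ} (hr : r ≠ 0)
    (p M : ℝ) : ∃ R t : ℝ, 0 < R ∧ 0 < t ∧
      t * (R ^ p * M) + t⁻¹ * (A ^ 2 + (R ^ (2 * r))⁻¹ * B ^ 2) =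
        (M + 2) * A ^ (1 - p / (2 * r)) * B ^ (p / (2 * r)) := by
  set Q : ℝ := (B / A) ^ (p / (2 * r)) with hQ
  have hQpos : 0 < Q := by positivity
  have hRp : ((B / A) ^ r⁻¹) ^ p = Q ^ 2 := by
    rw [hQ, ← Real.rpow_mul (by positivity), ← Real.rpow_mul_natCast (by positivity)]
    congr 1
    push_cast
    field_simp
  have hRr : ((B / A) ^ r⁻¹) ^ (2 * r) = (B / A) ^ 2 := by
    rw [← Real.rpow_mul (by positivity), ← Real.rpow_two]
    congr 1
    field_simp
  have hAB : A ^ (1 - p / (2 * r)) * B ^ (p / (2 * r)) = A * Q := by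
    rw [hQ, Real.rpow_sub hA, Real.rpow_one, Real.div_rpow hB.le hA.le]
    ring
  refine ⟨(B / A) ^ r⁻¹, A / Q, by positivity, by positivity, ?_⟩
  rw [hRp, hRr, mul_assoc, hAB]
  field_simp
  ring

theorem carlson_inequality [Nontrivial V] {q r : ℝ} (hq : -finrank ℝ V < 2 * q)
    (hqr : 2 * q + finrank ℝ V < 2 * r) : ∃ C : ℝ, 0 < C ∧ ∀ f : V → E,
      AEStronglyMeasurable f μ → Integrable (sobolevDensity 0 f) μ →
      Integrable (sobolevDensity r f) μ →
      Integrable (fun k ↦ ‖k‖ ^ q * ‖f k‖) μ ∧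
      ∫ k, ‖k‖ ^ q * ‖f k‖ ∂μ ≤
        C * sobolevNorm 0 f μ ^ (1 - (2 * q + finrank ℝ V) / (2 * r)) *
          sobolevNorm r f μ ^ ((2 * q + finrank ℝ V) / (2 * r)) := by
  set M : ℝ := ∫ x : V, ‖x‖ ^ (2 * q) / (1 + ‖x‖ ^ (2 * r)) ∂μ
  have : 0 ≤ M := integral_nonneg fun x ↦ by positivity
  refine ⟨(M + 2) / 2, by positivity, fun f hf hf0 hfr ↦ ?_⟩
  have hscaled {R t : ℝ} (hR : 0 < R) (ht : 0 < t) :=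
    integrable_norm_rpow_mul_norm_and_integral_le hq hqr hR ht hf hf0 hfr
  refine ⟨(hscaled one_pos one_pos).1, ?_⟩
  have hA0 := sobolevNorm_nonneg 0 f μ
  have hB0 := sobolevNorm_nonneg r f μ
  by_cases hzero : f =ᵐ[μ] 0
  · have hint : ∫ k, ‖k‖ ^ q * ‖f k‖ ∂μ = 0 :=
      integral_eq_zero_of_ae (by filter_upwards [hzero] with k hk; simp [hk])
    rw [hint]
    positivity
  have hA : 0 < sobolevNorm 0 f μ :=
    hA0.lt_of_ne' fun h ↦ hzero (ae_eq_zero_of_sobolevNorm_eq_zero hf0 h)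
  have hB : 0 < sobolevNorm r f μ :=
    hB0.lt_of_ne' fun h ↦ hzero (ae_eq_zero_of_sobolevNorm_eq_zero hfr h)
  obtain ⟨R, t, hR, ht, hRt⟩ := exists_scaling_eq_interpolation hA hB (r := r) (by linarith)
    (2 * q + finrank ℝ V) M
  refine (hscaled hR ht).2.trans_eq ?_
  rw [hRt]
  ring

end Carlson

section Symmetrisation

variable {X E : Type*} [MeasurableSpace X] [NormedAddCommGroup E] {μ : Measure X} {τ : X → X}
  {F : X → E}

lemma integrable_birkhoffSum (hτ : MeasurePreserving τ μ μ) (hF : Integrable F μ) (n : ℕ) :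
    Integrable (birkhoffSum τ F n) μ :=
  integrable_finsetSum _ fun i _ ↦ (hτ.iterate i).integrable_comp_of_integrable hF

variable [NormedSpace ℝ E]

lemma integral_birkhoffSum_s16 (hτ : MeasurePreserving τ μ μ) (hF : Integrable F μ) (n : ℕ) :
    ∫ p, birkhoffSum τ F n p ∂μ = n • ∫ p, F p ∂μ := by
  have hiterate (i : ℕ) : ∫ p, F (τ^[i] p) ∂μ = ∫ p, F p ∂μ := by
    have hi := hτ.iterate i
    have hmap := integral_map hi.aemeasurable (hi.map_eq.symm ▸ hF.aestronglyMeasurable)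
    rwa [hi.map_eq, eq_comm] at hmap
  calc ∫ p, birkhoffSum τ F n p ∂μ = ∑ i ∈ Finset.range n, ∫ p, F (τ^[i] p) ∂μ :=
        integral_finsetSum _ fun i _ ↦ (hτ.iterate i).integrable_comp_of_integrable hF
    _ = n • ∫ p, F p ∂μ := by simp only [hiterate, Finset.sum_const, Finset.card_range]

lemma norm_integral_le_of_norm_birkhoffSum_le (hτ : MeasurePreserving τ μ μ) {n : ℕ} (hn : n ≠ 0)
    (hF : Integrable F μ) {G : X → ℝ} (hG : Integrable G μ)
    (h : ∀ᵐ p ∂μ, ‖birkhoffSum τ F n p‖ ≤ birkhoffSum τ G n p) : ‖∫ p, F p ∂μ‖ ≤ ∫ p, G p ∂μ := by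
  have hsum : n • ‖∫ p, F p ∂μ‖ ≤ n • ∫ p, G p ∂μ := by
    rw [← RCLike.norm_nsmul ℝ, ← integral_birkhoffSum_s16 hτ hF, ← integral_birkhoffSum_s16 hτ hG]
    exact norm_integral_le_of_norm_le (integrable_birkhoffSum hτ hG n) h
  exact (smul_le_smul_iff_of_pos_left hn.bot_lt).1 hsum

end Symmetrisation

section TriadRotation

/-- A point `(k, l)` of the domain of integration encodes the resonant triad
`(a, b, c) = (k - l, l, -k)`, `a + b + c = 0`. This map is the rotation `(a, b, c) ↦ (c, a, b)` in
the coordinates `(k, l)`. -/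
def rotateTriad (p : ℝ × ℝ) : ℝ × ℝ := (-p.2, p.1 - p.2)

lemma measurePreserving_rotateTriad : MeasurePreserving rotateTriad := by
  have hswap := measurePreserving_prod_neg_add_swap (volume : Measure ℝ) (volume : Measure ℝ)
  have hneg := (Measure.measurePreserving_neg (volume : Measure ℝ)).prod
    (MeasurePreserving.id (volume : Measure ℝ))
  have hcomp : rotateTriad = Prod.map Neg.neg id ∘ fun z : ℝ × ℝ ↦ (z.2, -z.2 + z.1) := by
    ext p <;> simp [rotateTriad, sub_eq_neg_add]
  rw [hcomp]
  exact hneg.comp hswap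

lemma birkhoffSum_rotateTriad_three {M : Type*} [AddCommMonoid M] (F : ℝ × ℝ → M) (p : ℝ × ℝ) :
    birkhoffSum rotateTriad F 3 p =
      F p + F (-p.2, p.1 - p.2) + F (-(p.1 - p.2), -p.1) := by
  have htwice : rotateTriad (rotateTriad p) = (-(p.1 - p.2), -p.1) := by
    simp only [rotateTriad, Prod.mk.injEq, true_and]
    ring
  simp only [birkhoffSum, Finset.sum_range_succ, Finset.sum_range_zero, zero_add,
    Function.iterate_succ_apply, Function.iterate_zero, id, htwice]
  rfl

/-- The symmetrised product of `w` and `v` at the frequencies `b` and `c` of a triad. Summed over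
the three rotations it gives half the sum of all products of `w` and `v` at distinct frequencies. -/
noncomputable def pairProduct (w v : ℝ → ℝ) (p : ℝ × ℝ) : ℝ :=
  (w p.2 * v (-p.1) + w (-p.1) * v p.2) / 2

lemma integrable_pairProduct {w v : ℝ → ℝ} (hw : Integrable w) (hv : Integrable v) :
    Integrable (pairProduct w v) :=
  ((hw.comp_neg.mul_prod hv).add (hv.comp_neg.mul_prod hw) |>.div_const 2).congr
    (.of_forall fun p ↦ by simp only [pairProduct, Pi.add_apply]; ring)

lemma integral_pairProduct {w v : ℝ → ℝ} (hw : Integrable w) (hv : Integrable v) :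
    ∫ p, pairProduct w v p = (∫ k, w k) * ∫ k, v k := by
  have hwv : ∫ p : ℝ × ℝ, w (-p.1) * v p.2 = (∫ k, w k) * ∫ k, v k := by
    rw [Measure.volume_eq_prod, integral_prod_mul (fun k ↦ w (-k)) v, integral_neg_eq_self w]
  have hvw : ∫ p : ℝ × ℝ, w p.2 * v (-p.1) = (∫ k, w k) * ∫ k, v k := by
    simp_rw [mul_comm (w _)]
    rw [Measure.volume_eq_prod, integral_prod_mul (fun k ↦ v (-k)) w, integral_neg_eq_self v,
      mul_comm]
  have hint : Integrable fun p : ℝ × ℝ ↦ w p.2 * v (-p.1) := by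
    simp_rw [mul_comm (w _)]
    exact hv.comp_neg.mul_prod hw
  simp only [pairProduct]
  rw [integral_div, integral_add hint (hw.comp_neg.mul_prod hv), hvw, hwv]
  ring

end TriadRotation

section TrilinearForm

variable {A : Type*} [NormedCommRing A] [NormedAlgebra ℝ A]

/-- The integrand of the trilinear form at index `s`. The values of `f` may lie in any commutative
normed real algebra; the amplitude equation has `A = ℂ`. -/
noncomputable def trilinearIntegrand (s : ℝ) (f : ℝ → A) (p : ℝ × ℝ) : A :=
  (oddRpow (2 * s) p.1 * Sker (p.1 - p.2) p.2) • (f (p.1 - p.2) * f p.2 * f (-p.1))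

lemma birkhoffSum_trilinearIntegrand (s : ℝ) (f : ℝ → A) (p : ℝ × ℝ) :
    birkhoffSum rotateTriad (trilinearIntegrand s f) 3 p =
      -(((oddRpow (2 * s) (p.1 - p.2) + oddRpow (2 * s) p.2 + oddRpow (2 * s) (-p.1)) *
        Sker (p.1 - p.2) p.2) • (f (p.1 - p.2) * f p.2 * f (-p.1))) := by
  obtain ⟨k, l⟩ := p
  have hrotate : Sker (-k) (k - l) = Sker (k - l) l := (Sker_rotate (by ring)).symm
  have hrotate' : Sker l (-k) = Sker (k - l) l := Sker_rotate (by ring)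
  have hodd : oddRpow (2 * s) k = -oddRpow (2 * s) (-k) := by rw [oddRpow_neg, neg_neg]
  rw [birkhoffSum_rotateTriad_three]
  simp only [trilinearIntegrand, show -l - (k - l) = -k by ring, show -(k - l) - -k = l by ring,
    neg_neg, hrotate, hrotate', oddRpow_neg _ l, oddRpow_neg _ (k - l), hodd,
    show f (-k) * f (k - l) * f l = f (k - l) * f l * f (-k) by ring,
    show f l * f (-k) * f (k - l) = f (k - l) * f l * f (-k) by ring]
  module

lemma integrable_trilinearIntegrand {s : ℝ} (hs : 2 * s + 1 ≠ 0) {f : ℝ → A}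
    (hf : AEStronglyMeasurable f)
    (hint : Integrable fun p : ℝ × ℝ ↦
      (|p.1| ^ (2 * s + 1) + |p.1 - p.2| ^ (2 * s + 1) + |p.2| ^ (2 * s + 1)) *
        |Sker (p.1 - p.2) p.2| * ‖f (p.1 - p.2)‖ * ‖f p.2‖ * ‖f (-p.1)‖) :
    Integrable (trilinearIntegrand s f) := by
  have hkernel : Measurable fun p : ℝ × ℝ ↦ oddRpow (2 * s) p.1 * Sker (p.1 - p.2) p.2 :=
    ((measurable_oddRpow (2 * s)).comp measurable_fst).mul
      (measurable_Sker.comp ((measurable_fst.sub measurable_snd).prodMk measurable_snd))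
  have hneg : AEStronglyMeasurable fun k ↦ f (-k) :=
    hf.comp_measurePreserving (Measure.measurePreserving_neg volume)
  have hsub : AEStronglyMeasurable fun p : ℝ × ℝ ↦ f (p.1 - p.2) :=
    hf.comp_quasiMeasurePreserving (quasiMeasurePreserving_sub volume volume)
  have hproduct : AEStronglyMeasurable fun p : ℝ × ℝ ↦ f (p.1 - p.2) * f p.2 * f (-p.1) :=
    (hsub.mul hf.comp_snd).mul hneg.comp_fst
  refine hint.mono' (hkernel.aestronglyMeasurable.smul hproduct) (.of_forall fun p ↦ ?_)
  calc ‖trilinearIntegrand s f p‖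
      ≤ |p.1| ^ (2 * s + 1) * |Sker (p.1 - p.2) p.2| *
          (‖f (p.1 - p.2)‖ * ‖f p.2‖ * ‖f (-p.1)‖) := by
        rw [trilinearIntegrand, norm_smul, norm_mul, Real.norm_eq_abs, Real.norm_eq_abs,
          abs_oddRpow hs]
        gcongr
        exact norm_mul₃_le
    _ ≤ _ := by
        simp only [← mul_assoc]
        gcongr
        have : 0 ≤ |p.1 - p.2| ^ (2 * s + 1) := by positivity
        have : 0 ≤ |p.2| ^ (2 * s + 1) := by positivity
        linarith

lemma trilinearIntegrand_complex (s : ℝ) (f : ℝ → ℂ) (p : ℝ × ℝ) :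
    trilinearIntegrand s f p = ((p.1 * |p.1| ^ (2 * s) : ℝ) : ℂ) *
      ((Sker (p.1 - p.2) p.2 : ℝ) : ℂ) * f (p.1 - p.2) * f p.2 * f (-p.1) := by
  rw [trilinearIntegrand, oddRpow, Complex.real_smul, Complex.ofReal_mul _ (Sker _ _)]
  ring

lemma norm_sum_oddRpow_mul_Sker_smul_le {s a b c : ℝ} (hs : 0 ≤ s) (h : a + b + c = 0) (f : ℝ → A) :
    ‖((oddRpow (2 * s) a + oddRpow (2 * s) b + oddRpow (2 * s) c) * Sker a b) •
        (f a * f b * f c)‖ ≤ triadConst s *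
      (‖a‖ ^ (3 / 2 : ℝ) * ‖f a‖ * ((sobolevDensity s f b + sobolevDensity s f c) / 2) +
        ‖b‖ ^ (3 / 2 : ℝ) * ‖f b‖ * ((sobolevDensity s f c + sobolevDensity s f a) / 2) +
        ‖c‖ ^ (3 / 2 : ℝ) * ‖f c‖ * ((sobolevDensity s f a + sobolevDensity s f b) / 2)) := by
  have hK := triadConst_pos hs
  have hamgm (x y : ℝ) : (‖x‖ ^ s * ‖f x‖) * (‖y‖ ^ s * ‖f y‖) ≤
      (sobolevDensity s f x + sobolevDensity s f y) / 2 := by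
    rw [sobolevDensity_eq_sq, sobolevDensity_eq_sq]
    linarith [two_mul_le_add_sq (‖x‖ ^ s * ‖f x‖) (‖y‖ ^ s * ‖f y‖)]
  have htriad := abs_sum_oddRpow_mul_Sker_le hs h
  simp only [← Real.norm_eq_abs] at htriad
  rw [norm_smul, norm_mul, Real.norm_of_nonneg (Sker_nonneg a b)]
  calc _ ≤ triadConst s * (‖a‖ ^ (3 / 2 : ℝ) * (‖b‖ ^ s * ‖c‖ ^ s) +
          ‖b‖ ^ (3 / 2 : ℝ) * (‖c‖ ^ s * ‖a‖ ^ s) + ‖c‖ ^ (3 / 2 : ℝ) * (‖a‖ ^ s * ‖b‖ ^ s)) *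
        (‖f a‖ * ‖f b‖ * ‖f c‖) := by
        gcongr
        exact norm_mul₃_le
    _ = triadConst s *
        (‖a‖ ^ (3 / 2 : ℝ) * ‖f a‖ * ((‖b‖ ^ s * ‖f b‖) * (‖c‖ ^ s * ‖f c‖)) +
          ‖b‖ ^ (3 / 2 : ℝ) * ‖f b‖ * ((‖c‖ ^ s * ‖f c‖) * (‖a‖ ^ s * ‖f a‖)) +
          ‖c‖ ^ (3 / 2 : ℝ) * ‖f c‖ * ((‖a‖ ^ s * ‖f a‖) * (‖b‖ ^ s * ‖f b‖))) := by ring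
    _ ≤ _ := by gcongr <;> exact hamgm _ _

lemma norm_birkhoffSum_trilinearIntegrand_le {s : ℝ} (hs : 0 ≤ s) (f : ℝ → A) (p : ℝ × ℝ) :
    ‖birkhoffSum rotateTriad (trilinearIntegrand s f) 3 p‖ ≤
      birkhoffSum rotateTriad (fun p ↦ triadConst s *
        pairProduct (fun k ↦ ‖k‖ ^ (3 / 2 : ℝ) * ‖f k‖) (sobolevDensity s f) p) 3 p := by
  obtain ⟨k, l⟩ := p
  rw [birkhoffSum_trilinearIntegrand, birkhoffSum_rotateTriad_three, norm_neg]
  refine (norm_sum_oddRpow_mul_Sker_smul_le hs (by ring) f).trans_eq ?_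
  simp only [pairProduct, neg_neg]
  ring

theorem trilinear_estimate_blowup_general [CompleteSpace A] {s s' : ℝ} (hs : 0 ≤ s)
    (hs' : 2 < s') : ∃ C : ℝ, 0 < C ∧ ∀ f : ℝ → A, AEStronglyMeasurable f →
      Integrable (sobolevDensity 0 f) → Integrable (sobolevDensity s f) →
      Integrable (sobolevDensity s' f) → Integrable (trilinearIntegrand s f) →
      ‖∫ p, trilinearIntegrand s f p‖ ≤
        C * sobolevNorm 0 f volume ^ (1 - 2 / s') * sobolevNorm s' f volume ^ (2 / s') *
          sobolevNorm s f volume ^ 2 := by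
  have hK := triadConst_pos hs
  obtain ⟨C, hC, hcarlson⟩ := carlson_inequality (E := A) (μ := (volume : Measure ℝ))
    (q := 3 / 2) (r := s') (by norm_num) (by norm_num; linarith)
  refine ⟨triadConst s * C, by positivity, fun f hf hf0 hfs hfs' hint ↦ ?_⟩
  obtain ⟨hw, hwle⟩ := hcarlson f hf hf0 hfs'
  have hexp : (2 * (3 / 2 : ℝ) + Module.finrank ℝ ℝ) / (2 * s') = 2 / s' := by
    rw [Module.finrank_self]
    field_simp
    norm_num
  rw [hexp] at hwle
  have hmajorant := (integrable_pairProduct hw hfs).const_mul (triadConst s)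
  calc ‖∫ p, trilinearIntegrand s f p‖
      ≤ ∫ p, triadConst s * pairProduct _ (sobolevDensity s f) p :=
        norm_integral_le_of_norm_birkhoffSum_le measurePreserving_rotateTriad three_ne_zero hint
          hmajorant (.of_forall (norm_birkhoffSum_trilinearIntegrand_le hs f))
    _ = triadConst s * ((∫ k, ‖k‖ ^ (3 / 2 : ℝ) * ‖f k‖) * sobolevNorm s f volume ^ 2) := by
        rw [integral_const_mul, integral_pairProduct hw hfs, sobolevNorm_sq]
    _ ≤ triadConst s * ((C * sobolevNorm 0 f volume ^ (1 - 2 / s') *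
          sobolevNorm s' f volume ^ (2 / s')) * sobolevNorm s f volume ^ 2) := by
        gcongr
    _ = _ := by ring

end TrilinearForm

/-- The trilinear estimate behind the blow-up criterion: the trilinear form at index
`s` is controlled by `‖f‖₀^{1−2/s'} ‖f‖_{s'}^{2/s'} ‖f‖ₛ²` for any `s' > 2`. -/
theorem trilinear_estimate_blowup (s s' : ℝ) (hs : 0 < s) (hs' : 2 < s') :
    ∃ C : ℝ, 0 < C ∧ ∀ f : ℝ → ℂ, Measurable f →
      (∀ᵐ k : ℝ, f (-k) = (starRingEnd ℂ) (f k)) →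
      Integrable (fun k : ℝ => ‖f k‖ ^ 2) →
      Integrable (fun k : ℝ => |k| ^ (2 * s) * ‖f k‖ ^ 2) →
      Integrable (fun k : ℝ => |k| ^ (2 * s') * ‖f k‖ ^ 2) →
      Integrable (fun p : ℝ × ℝ =>
        (|p.1| ^ (2 * s + 1) + |p.1 - p.2| ^ (2 * s + 1) + |p.2| ^ (2 * s + 1)) *
          |Sker (p.1 - p.2) p.2| * ‖f (p.1 - p.2)‖ * ‖f p.2‖ * ‖f (-p.1)‖) →
      ‖∫ p : ℝ × ℝ, ((p.1 * |p.1| ^ (2 * s) : ℝ) : ℂ) * ((Sker (p.1 - p.2) p.2 : ℝ) : ℂ) *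
          f (p.1 - p.2) * f p.2 * f (-p.1)‖ ≤
        C * (Real.sqrt (∫ k : ℝ, ‖f k‖ ^ 2)) ^ (1 - 2 / s') *
          (Real.sqrt (∫ k : ℝ, |k| ^ (2 * s') * ‖f k‖ ^ 2)) ^ (2 / s') *
          (Real.sqrt (∫ k : ℝ, |k| ^ (2 * s) * ‖f k‖ ^ 2)) ^ 2 := by
  obtain ⟨C, hC, h⟩ := trilinear_estimate_blowup_general (A := ℂ) hs.le hs'
  refine ⟨C, hC, fun f hf _ hf0 hfs hfs' hint ↦ ?_⟩
  simpa only [trilinearIntegrand_complex, sobolevNorm, sobolevDensity, mul_zero, Real.rpow_zero,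
    one_mul, Real.norm_eq_abs] using
    h f hf.aestronglyMeasurable (by rwa [sobolevDensity_zero]) hfs hfs'
      (integrable_trilinearIntegrand (by positivity) hf.aestronglyMeasurable hint)
end
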